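/- Let q be a braiding matrix with connected Dynkin diagram such that B_q is finite dimensional, and let B be a pre-Nichols algebra of q with finite GKdim. Let i,j,k ∈ I_θ be such that q_{jj} = q_{kk} = q̃_{jk} = −1, q_{ii} = −q̃_{ij} ∈ G_3' and q̃_{ik} = 1. Then [x_{iijk}, x_{ijk}]_c = 0 in B. -/

import Mathlib

/-
Common framework for formalizing statements from
"Finite GK-dimensional pre-Nichols algebras of (super)modular and unidentified type"
(Angiono, Campagnolo, Sanmarco).

We work over `ℂ` (an algebraically closed field of characteristic zero).
A braiding matrix is `q : Fin θ → Fin θ → ℂˣ`.  The tensor algebra `T(V)` of the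
associated braided vector space of diagonal type is realized as the free algebra
on `Fin θ`.  The braided bialgebra structure on `T(V)` (the braided coproduct,
uniquely determined by the braiding matrix) is packaged in the structure
`BraidedStr`: its fields characterize it uniquely, so quantifying over
`S : BraidedStr θ q` is equivalent to using "the" braided coproduct.

A pre-Nichols algebra of `q` is the quotient `T(V)/I` by an ℕ₀-homogeneous
(two-sided) braided bi-ideal `I` generated in degrees ≥ 2 (`IsPreNicholsIdeal`);
such an ideal is automatically contained in the defining ideal `Jq` of the
Nichols algebra, which is the largest such ideal.  A statement
"`x = 0` holds in the pre-Nichols algebra `T(V)/I`" is formalized as `x ∈ I`.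
-/

open scoped TensorProduct

noncomputable section

namespace PreNicholsPaper

/-- The tensor algebra `T(V)` of the braided vector space of diagonal type of rank `θ`. -/
abbrev TV (θ : ℕ) := FreeAlgebra ℂ (Fin θ)

/-- The generator `x_i` of `T(V)`. -/
def gen (θ : ℕ) (i : Fin θ) : TV θ := FreeAlgebra.ι ℂ i

/-- The monomial `x_{i_1} ⋯ x_{i_n}` associated to a word. -/
def wordElem (θ : ℕ) (w : List (Fin θ)) : TV θ := (w.map (gen θ)).prod

/-- The multidegree in `ℕ₀^θ` of a word. -/
def degW (θ : ℕ) (w : List (Fin θ)) : Fin θ → ℕ := fun i => w.count i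

/-- `α_i`, the `i`-th canonical basis vector of `ℕ₀^θ`. -/
def δ (θ : ℕ) (i : Fin θ) : Fin θ → ℕ := fun k => if k = i then 1 else 0

/-- The bilinear form `ℕ₀^θ × ℕ₀^θ → ℂˣ` attached to the braiding matrix,
`q(α_i, α_j) = q_{ij}`, evaluated in `ℂ`. -/
def qf {θ : ℕ} (q : Fin θ → Fin θ → ℂˣ) (a b : Fin θ → ℕ) : ℂ :=
  ∏ i : Fin θ, ∏ j : Fin θ, (q i j : ℂ) ^ (a i * b j)

/-- `q̃_{ij} = q_{ij} q_{ji}`. -/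
def qtil {θ : ℕ} (q : Fin θ → Fin θ → ℂˣ) (i j : Fin θ) : ℂ := (q i j : ℂ) * (q j i : ℂ)

/-- The braided commutator `[u,v]_c = uv - q(a,b) vu` of elements `u, v`
which are homogeneous of multidegrees `a`, `b` respectively. -/
def brk {θ : ℕ} (q : Fin θ → Fin θ → ℂˣ) (a b : Fin θ → ℕ) (u v : TV θ) : TV θ :=
  u * v - qf q a b • (v * u)

/-- `(ad_c x_i) y = x_i y - q(α_i, b) y x_i` for `y` homogeneous of multidegree `b`. -/
def ad1 {θ : ℕ} (q : Fin θ → Fin θ → ℂˣ) (i : Fin θ) (b : Fin θ → ℕ) (y : TV θ) : TV θ :=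
  brk q (δ θ i) b (gen θ i) y

/-- The iterated braided adjoint `x_{i_1 i_2 ⋯ i_k} = (ad_c x_{i_1}) x_{i_2 ⋯ i_k}`. -/
def xw {θ : ℕ} (q : Fin θ → Fin θ → ℂˣ) : List (Fin θ) → TV θ
  | [] => 1
  | [i] => gen θ i
  | i :: w => ad1 q i (degW θ w) (xw q w)

/-- `(ad_c x_i)^m x_j`. -/
def adpow {θ : ℕ} (q : Fin θ → Fin θ → ℂˣ) (i j : Fin θ) : ℕ → TV θ
  | 0 => gen θ j
  | m + 1 => ad1 q i (fun k => m * δ θ i k + δ θ j k) (adpow q i j m)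

/-- The homogeneous component of total degree `n` of `T(V)`. -/
def homogTot (θ : ℕ) (n : ℕ) : Submodule ℂ (TV θ) :=
  Submodule.span ℂ {x | ∃ w : List (Fin θ), w.length = n ∧ x = wordElem θ w}

/-- The homogeneous component of multidegree `d ∈ ℕ₀^θ` of `T(V)`. -/
def homogD (θ : ℕ) (d : Fin θ → ℕ) : Submodule ℂ (TV θ) :=
  Submodule.span ℂ {x | ∃ w : List (Fin θ), degW θ w = d ∧ x = wordElem θ w}

/-- The braided bialgebra structure on `T(V)` determined by the braiding matrix `q`:
the braided coproduct `Δ` together with the multiplication `mulB` of the braided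
tensor product `T(V) ⊗ T(V)`.  These axioms determine `Δ` and `mulB` uniquely. -/
structure BraidedStr (θ : ℕ) (q : Fin θ → Fin θ → ℂˣ) where
  Δ : TV θ →ₗ[ℂ] TensorProduct ℂ (TV θ) (TV θ)
  mulB : TensorProduct ℂ (TV θ) (TV θ) →ₗ[ℂ]
    TensorProduct ℂ (TV θ) (TV θ) →ₗ[ℂ] TensorProduct ℂ (TV θ) (TV θ)
  mulB_spec : ∀ (a d : TV θ) (wb wc : List (Fin θ)),
    mulB (a ⊗ₜ[ℂ] wordElem θ wb) (wordElem θ wc ⊗ₜ[ℂ] d)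
      = qf q (degW θ wb) (degW θ wc) • ((a * wordElem θ wc) ⊗ₜ[ℂ] (wordElem θ wb * d))
  Δ_one : Δ 1 = 1 ⊗ₜ[ℂ] 1
  Δ_gen : ∀ i, Δ (gen θ i) = gen θ i ⊗ₜ[ℂ] 1 + 1 ⊗ₜ[ℂ] gen θ i
  Δ_mul : ∀ u v : TV θ, Δ (u * v) = mulB (Δ u) (Δ v)

variable {θ : ℕ} {q : Fin θ → Fin θ → ℂˣ}

/-- `x` is a primitive element. -/
def IsPrimitiveIn (S : BraidedStr θ q) (x : TV θ) : Prop :=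
  S.Δ x = x ⊗ₜ[ℂ] (1 : TV θ) + (1 : TV θ) ⊗ₜ[ℂ] x

/-- The submodule `I ⊗ T(V) + T(V) ⊗ J` of `T(V) ⊗ T(V)`. -/
def mixedPair (I J : Submodule ℂ (TV θ)) : Submodule ℂ (TensorProduct ℂ (TV θ) (TV θ)) :=
  Submodule.span ℂ
    ({x | ∃ a b : TV θ, a ∈ I ∧ x = a ⊗ₜ[ℂ] b} ∪ {x | ∃ a b : TV θ, b ∈ J ∧ x = a ⊗ₜ[ℂ] b})

/-- The submodule `I ⊗ T(V) + T(V) ⊗ I` of `T(V) ⊗ T(V)`. -/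
def mixedSub (I : Submodule ℂ (TV θ)) : Submodule ℂ (TensorProduct ℂ (TV θ) (TV θ)) :=
  mixedPair I I

/-- `I` is the defining ideal of a pre-Nichols algebra of `q`：an ℕ₀-homogeneous
two-sided (bi-)ideal of `T(V)` generated in degrees `≥ 2` which is also a coideal.
Such an ideal is automatically contained in the defining ideal `Jq` of the Nichols
algebra, and the pre-Nichols algebra is the quotient `T(V)/I`. -/
structure IsPreNicholsIdeal (S : BraidedStr θ q) (I : Submodule ℂ (TV θ)) : Prop where
  mul_left : ∀ a x : TV θ, x ∈ I → a * x ∈ I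
  mul_right : ∀ a x : TV θ, x ∈ I → x * a ∈ I
  homog_ge2 : I = Submodule.span ℂ {x | x ∈ I ∧ ∃ n, 2 ≤ n ∧ x ∈ homogTot θ n}
  coideal : ∀ x ∈ I, S.Δ x ∈ mixedSub I

/-- The defining ideal `J_q` of the Nichols algebra `B_q = T(V)/J_q`:
the maximal homogeneous braided Hopf ideal generated in degrees `≥ 2`. -/
def Jq (S : BraidedStr θ q) : Submodule ℂ (TV θ) := sSup {I | IsPreNicholsIdeal S I}

/-- The standard filtration of `T(V)`: span of words of length `≤ n`. -/
def Wfil (θ : ℕ) (n : ℕ) : Submodule ℂ (TV θ) :=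
  Submodule.span ℂ {x | ∃ w : List (Fin θ), w.length ≤ n ∧ x = wordElem θ w}

/-- The quotient algebra `T(V)/I` has finite Gelfand–Kirillov dimension, i.e.
the standard filtration of the (finitely generated) quotient has polynomial growth. -/
def FinGK (I : Submodule ℂ (TV θ)) : Prop :=
  ∃ C d : ℕ, ∀ n : ℕ, Module.finrank ℂ ((Wfil θ n).map I.mkQ) ≤ C * (n + 1) ^ d

/-- The Gelfand–Kirillov dimension of the quotient algebra `T(V)/I`. -/
def GKdim (I : Submodule ℂ (TV θ)) : ℝ :=
  Filter.limsup
    (fun n : ℕ => Real.log (Module.finrank ℂ ((Wfil θ n).map I.mkQ)) / Real.log n)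
    Filter.atTop

/-- `I` defines an eminent pre-Nichols algebra: it is a finite-GKdim pre-Nichols
algebra, and every finite-GKdim pre-Nichols algebra of `q` is a quotient of it. -/
def IsEminent (S : BraidedStr θ q) (I : Submodule ℂ (TV θ)) : Prop :=
  IsPreNicholsIdeal S I ∧ FinGK I ∧
    ∀ I' : Submodule ℂ (TV θ), IsPreNicholsIdeal S I' → FinGK I' → I ≤ I'

/-- The Dynkin diagram of the braiding matrix `q`: vertices `Fin θ`, an edge between
`i ≠ j` iff `q̃_{ij} ≠ 1`. -/
def dynkin {θ : ℕ} (q : Fin θ → Fin θ → ℂˣ) : SimpleGraph (Fin θ) :=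
  SimpleGraph.fromRel (fun i j => qtil q i j ≠ 1)

/-- The quantum number `(m)_t = 1 + t + ⋯ + t^{m-1}`. -/
def qnum (t : ℂ) (m : ℕ) : ℂ := ∑ k ∈ Finset.range m, t ^ k

/-- The set of `n ∈ ℕ₀` such that `(n+1)_{q_{ii}} (1 - q_{ii}^n q̃_{ij}) = 0`,
i.e. such that `(ad_c x_i)^{n+1} x_j = 0` in the Nichols algebra.  The entry
`c_{ij}` of the generalized Cartan matrix is `-(min of this set)`. -/
def cSet {θ : ℕ} (q : Fin θ → Fin θ → ℂˣ) (i j : Fin θ) : Set ℕ :=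
  {n | qnum (q i i : ℂ) (n + 1) * (1 - (q i i : ℂ) ^ n * qtil q i j) = 0}

/-- The generalized Cartan matrix of `q`. -/
def cij {θ : ℕ} (q : Fin θ → Fin θ → ℂˣ) (i j : Fin θ) : ℤ :=
  if i = j then 2 else -(Int.ofNat (sInf (cSet q i j)))

/-- All entries `c_{ij}` are defined at the vertex `i`. -/
def reflectable {θ : ℕ} (q : Fin θ → Fin θ → ℂˣ) (i : Fin θ) : Prop :=
  ∀ j, j ≠ i → (cSet q i j).Nonempty

/-- The `i`-th reflection of the braiding matrix:
`(r_i q)_{jk} = q(s_i α_j, s_i α_k)` where `s_i α_j = α_j - c_{ij} α_i`. -/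
def reflectMat {θ : ℕ} (q : Fin θ → Fin θ → ℂˣ) (i : Fin θ) : Fin θ → Fin θ → ℂˣ :=
  fun j k =>
    q j k * q j i ^ (-(cij q i k)) * q i k ^ (-(cij q i j)) * q i i ^ (cij q i j * cij q i k)

/-- The reflection `s_i` acting on `ℤ^θ`. -/
def sRefl {θ : ℕ} (q : Fin θ → Fin θ → ℂˣ) (i : Fin θ) (β : Fin θ → ℤ) : Fin θ → ℤ :=
  fun k => β k - (if k = i then ∑ j, cij q i j * β j else 0)

/-- The (real) roots of `q`, together with the base points of the Weyl groupoid at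
which they live: pairs `(q', β)` obtained from a simple root of `q` by iterated
reflections. -/
inductive ReachRoot {θ : ℕ} (q₀ : Fin θ → Fin θ → ℂˣ) :
    (Fin θ → Fin θ → ℂˣ) → (Fin θ → ℤ) → Prop
  | simple (j : Fin θ) : ReachRoot q₀ q₀ (fun k => if k = j then 1 else 0)
  | reflect {q' : Fin θ → Fin θ → ℂˣ} {β : Fin θ → ℤ} (i : Fin θ) :
      ReachRoot q₀ q' β → ReachRoot q₀ (reflectMat q' i) (sRefl q' i β)

/-- `q` has a finite (generalized) root system: all reflections are defined at every
point of the Weyl groupoid, and the set of roots so obtained is finite. -/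
def FiniteRootSystem {θ : ℕ} (q : Fin θ → Fin θ → ℂˣ) : Prop :=
  (∀ q' i, (∃ β, ReachRoot q q' β) → reflectable q' i) ∧
    Set.Finite {β : Fin θ → ℤ | ∃ q', ReachRoot q q' β}

/-- Conjecture (Andruskiewitsch–Angiono–Heckenberger): the root system of a Nichols
algebra of diagonal type with finite Gelfand–Kirillov dimension is finite. -/
def AAH : Prop :=
  ∀ (θ : ℕ) (q : Fin θ → Fin θ → ℂˣ) (S : BraidedStr θ q), FinGK (Jq S) → FiniteRootSystem q

/-- The two-sided ideal of `T(V)` generated by a set. -/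
def idealGen (θ : ℕ) (s : Set (TV θ)) : Submodule ℂ (TV θ) :=
  Submodule.span ℂ {x | ∃ g ∈ s, ∃ a b : TV θ, x = a * g * b}

end PreNicholsPaper

namespace PreNicholsPaper

section Words

variable {θ : ℕ}

@[simp] theorem wordElem_nil : wordElem θ [] = 1 := rfl

@[simp] theorem wordElem_cons (m : Fin θ) (w : List (Fin θ)) :
    wordElem θ (m :: w) = gen θ m * wordElem θ w := rfl

theorem wordElem_append (v w : List (Fin θ)) :
    wordElem θ (v ++ w) = wordElem θ v * wordElem θ w := by
  simp [wordElem]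

theorem wordElem_singleton (m : Fin θ) : wordElem θ [m] = gen θ m := by simp

@[simp] theorem degW_nil : degW θ [] = 0 := by ext; simp [degW]

theorem degW_append (v w : List (Fin θ)) : degW θ (v ++ w) = degW θ v + degW θ w := by
  ext; simp [degW]

@[simp] theorem degW_cons (m : Fin θ) (w : List (Fin θ)) :
    degW θ (m :: w) = δ θ m + degW θ w := by
  ext l
  by_cases h : m = l
  · simp [degW, δ, h, add_comm]
  · simp [degW, δ, h, Ne.symm h]

theorem span_range_wordElem : Submodule.span ℂ (Set.range (wordElem θ)) = ⊤ := by
  rw [eq_top_iff]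
  rintro x -
  induction x using FreeAlgebra.induction with
  | grade0 r =>
    rw [Algebra.algebraMap_eq_smul_one]
    exact Submodule.smul_mem _ _ (Submodule.subset_span ⟨[], rfl⟩)
  | grade1 m => exact Submodule.subset_span ⟨[m], by simp [gen]⟩
  | add a b ha hb => exact Submodule.add_mem _ ha hb
  | mul a b ha hb =>
    induction ha using Submodule.span_induction with
    | zero => simp
    | add x y _ _ hx hy => rw [add_mul]; exact Submodule.add_mem _ hx hy
    | smul c x _ hx => rw [smul_mul_assoc]; exact Submodule.smul_mem _ _ hx
    | mem x hx =>
      obtain ⟨v, rfl⟩ := hx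
      induction hb using Submodule.span_induction with
      | zero => simp
      | add x y _ _ hx hy => rw [mul_add]; exact Submodule.add_mem _ hx hy
      | smul c x _ hx => rw [mul_smul_comm]; exact Submodule.smul_mem _ _ hx
      | mem x hx =>
        obtain ⟨w, rfl⟩ := hx
        exact Submodule.subset_span ⟨v ++ w, wordElem_append v w⟩

/-- Linear maps out of `T(V)` agreeing on words are equal. -/
theorem linearMap_ext_word {N : Type*} [AddCommMonoid N] [Module ℂ N] {f g : TV θ →ₗ[ℂ] N}
    (h : ∀ w, f (wordElem θ w) = g (wordElem θ w)) : f = g :=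
  LinearMap.ext_on_range span_range_wordElem h

/-- Linear maps out of `T(V) ⊗ T(V)` agreeing on `word ⊗ anything` are equal. -/
theorem tensor_ext_word_left {N : Type*} [AddCommMonoid N] [Module ℂ N]
    {f g : TV θ ⊗[ℂ] TV θ →ₗ[ℂ] N}
    (h : ∀ w d, f (wordElem θ w ⊗ₜ d) = g (wordElem θ w ⊗ₜ d)) : f = g := by
  apply TensorProduct.ext
  apply linearMap_ext_word
  intro w
  ext d
  exact h w d

@[elab_as_elim]
theorem word_induction {P : TV θ → Prop} (word : ∀ w, P (wordElem θ w))
    (zero : P 0) (add : ∀ x y, P x → P y → P (x + y)) (smul : ∀ (c : ℂ) x, P x → P (c • x))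
    (x : TV θ) : P x := by
  have hx : x ∈ Submodule.span ℂ (Set.range (wordElem θ)) := by
    rw [span_range_wordElem]; trivial
  induction hx using Submodule.span_induction with
  | zero => exact zero
  | add x y _ _ hx hy => exact add _ _ hx hy
  | smul c x _ hx => exact smul _ _ hx
  | mem x hx => obtain ⟨w, rfl⟩ := hx; exact word w

theorem wordElem_mem_homogD (w : List (Fin θ)) : wordElem θ w ∈ homogD θ (degW θ w) :=
  Submodule.subset_span ⟨w, rfl, rfl⟩

theorem wordElem_mem_homogTot (w : List (Fin θ)) : wordElem θ w ∈ homogTot θ w.length :=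
  Submodule.subset_span ⟨w, rfl, rfl⟩

theorem gen_mem_homogD (m : Fin θ) : gen θ m ∈ homogD θ (δ θ m) := by
  simpa using wordElem_mem_homogD [m]

theorem one_mem_homogD : (1 : TV θ) ∈ homogD θ 0 := by
  simpa using wordElem_mem_homogD ([] : List (Fin θ))

theorem mul_mem_homogD {a b : Fin θ → ℕ} {x y : TV θ} (hx : x ∈ homogD θ a)
    (hy : y ∈ homogD θ b) : x * y ∈ homogD θ (a + b) := by
  have := Submodule.mul_mem_mul hx hy
  refine SetLike.le_def.1 ?_ this
  rw [homogD, homogD, Submodule.span_mul_span, Submodule.span_le]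
  rintro _ ⟨_, ⟨v, rfl, rfl⟩, _, ⟨w, rfl, rfl⟩, rfl⟩
  exact Submodule.subset_span ⟨v ++ w, degW_append v w, (wordElem_append v w).symm⟩

theorem mul_mem_homogTot {a b : ℕ} {x y : TV θ} (hx : x ∈ homogTot θ a)
    (hy : y ∈ homogTot θ b) : x * y ∈ homogTot θ (a + b) := by
  have := Submodule.mul_mem_mul hx hy
  refine SetLike.le_def.1 ?_ this
  rw [homogTot, homogTot, Submodule.span_mul_span, Submodule.span_le]
  rintro _ ⟨_, ⟨v, rfl, rfl⟩, _, ⟨w, rfl, rfl⟩, rfl⟩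
  exact Submodule.subset_span ⟨v ++ w, List.length_append, (wordElem_append v w).symm⟩

theorem length_eq_sum_degW (w : List (Fin θ)) : w.length = ∑ l, degW θ w l := by
  induction w with
  | nil => simp
  | cons m w ih => simp [ih, Finset.sum_add_distrib, δ, add_comm]

theorem homogD_le_homogTot (d : Fin θ → ℕ) : homogD θ d ≤ homogTot θ (∑ l, d l) := by
  rw [homogD, Submodule.span_le]
  rintro _ ⟨w, rfl, rfl⟩
  rw [← length_eq_sum_degW]
  exact wordElem_mem_homogTot w

variable (q : Fin θ → Fin θ → ℂˣ)

theorem qf_add_left (a b c : Fin θ → ℕ) : qf q (a + b) c = qf q a c * qf q b c := by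
  simp [qf, add_mul, pow_add, Finset.prod_mul_distrib]

theorem qf_add_right (a b c : Fin θ → ℕ) : qf q a (b + c) = qf q a b * qf q a c := by
  simp [qf, mul_add, pow_add, Finset.prod_mul_distrib]

@[simp] theorem qf_zero_left (a : Fin θ → ℕ) : qf q 0 a = 1 := by simp [qf]

@[simp] theorem qf_zero_right (a : Fin θ → ℕ) : qf q a 0 = 1 := by simp [qf]

@[simp] theorem qf_δ (l m : Fin θ) : qf q (δ θ l) (δ θ m) = q l m := by
  rw [qf, Finset.prod_eq_single l, Finset.prod_eq_single m]
  · simp [δ]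
  · intro b _ hb; simp [δ, hb]
  · simp
  · intro b _ hb; simp [δ, hb]
  · simp

theorem brk_mem_homogD {a b : Fin θ → ℕ} {x y : TV θ} (hx : x ∈ homogD θ a)
    (hy : y ∈ homogD θ b) : brk q a b x y ∈ homogD θ (a + b) :=
  Submodule.sub_mem _ (mul_mem_homogD hx hy)
    (Submodule.smul_mem _ _ (add_comm b a ▸ mul_mem_homogD hy hx))

end Words

section Operators

variable {θ : ℕ} (q : Fin θ → Fin θ → ℂˣ)

/-- The automorphism of `T(V)` acting on degree `γ` by `q(α_m, γ)`. -/
def twistL (m : Fin θ) : TV θ →ₐ[ℂ] TV θ :=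
  FreeAlgebra.lift ℂ fun l => (q m l : ℂ) • gen θ l

/-- The automorphism of `T(V)` acting on degree `γ` by `q(γ, α_m)`. -/
def twistR (m : Fin θ) : TV θ →ₐ[ℂ] TV θ :=
  FreeAlgebra.lift ℂ fun l => (q l m : ℂ) • gen θ l

@[simp] theorem twistL_gen (m l : Fin θ) : twistL q m (gen θ l) = (q m l : ℂ) • gen θ l := by
  simp [twistL, gen]

@[simp] theorem twistR_gen (m l : Fin θ) : twistR q m (gen θ l) = (q l m : ℂ) • gen θ l := by
  simp [twistR, gen]

theorem twistL_word (m : Fin θ) (w : List (Fin θ)) :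
    twistL q m (wordElem θ w) = qf q (δ θ m) (degW θ w) • wordElem θ w := by
  induction w with
  | nil => simp
  | cons l w ih => simp [ih, qf_add_right, smul_smul, mul_comm]

theorem twistR_word (m : Fin θ) (w : List (Fin θ)) :
    twistR q m (wordElem θ w) = qf q (degW θ w) (δ θ m) • wordElem θ w := by
  induction w with
  | nil => simp
  | cons l w ih => simp [ih, qf_add_left, smul_smul, mul_comm]

/-- Left multiplication by `y ⊗ 1` in the braided tensor product `T(V) ⊗ T(V)`. -/
def opA (θ : ℕ) : TV θ →ₐ[ℂ] Module.End ℂ (TV θ ⊗[ℂ] TV θ) :=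
  (Module.End.rTensorAlgHom ℂ (TV θ) (TV θ)).comp (Algebra.lmul ℂ (TV θ))

@[simp] theorem opA_tmul (y c d : TV θ) : opA θ y (c ⊗ₜ d) = (y * c) ⊗ₜ d := rfl

/-- Left multiplication by `1 ⊗ y` in the braided tensor product `T(V) ⊗ T(V)`. -/
def opB : TV θ →ₐ[ℂ] Module.End ℂ (TV θ ⊗[ℂ] TV θ) :=
  FreeAlgebra.lift ℂ fun m =>
    TensorProduct.map (twistL q m).toLinearMap (LinearMap.mulLeft ℂ (gen θ m))

@[simp] theorem opB_gen_tmul (m : Fin θ) (c d : TV θ) :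
    opB q (gen θ m) (c ⊗ₜ d) = twistL q m c ⊗ₜ (gen θ m * d) := by
  simp [opB, gen]

/-- Left multiplication by `Δ(y)` in the braided tensor product `T(V) ⊗ T(V)`. -/
def opL : TV θ →ₐ[ℂ] Module.End ℂ (TV θ ⊗[ℂ] TV θ) :=
  FreeAlgebra.lift ℂ fun m => opA θ (gen θ m) + opB q (gen θ m)

@[simp] theorem opL_gen (m : Fin θ) : opL q (gen θ m) = opA θ (gen θ m) + opB q (gen θ m) := by
  simp [opL, gen]

theorem opB_word_tmul (v w : List (Fin θ)) (d : TV θ) :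
    opB q (wordElem θ v) (wordElem θ w ⊗ₜ d) =
      qf q (degW θ v) (degW θ w) • (wordElem θ w ⊗ₜ (wordElem θ v * d)) := by
  induction v with
  | nil => simp
  | cons m v ih =>
    simp [ih, twistL_word, qf_add_left, TensorProduct.smul_tmul', smul_smul, mul_assoc, mul_comm]

theorem opB_tmul {a b : Fin θ → ℕ} {y c : TV θ} (hy : y ∈ homogD θ a) (hc : c ∈ homogD θ b)
    (d : TV θ) : opB q y (c ⊗ₜ d) = qf q a b • (c ⊗ₜ (y * d)) := by
  induction hy using Submodule.span_induction with
  | zero => simp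
  | add x y _ _ hx hy => simp [hx, hy, add_mul, TensorProduct.tmul_add]
  | smul t x _ hx => simp [hx, smul_comm t]
  | mem x hx =>
    obtain ⟨v, rfl, rfl⟩ := hx
    induction hc using Submodule.span_induction with
    | zero => simp
    | add x y _ _ hx hy => simp [hx, hy, TensorProduct.add_tmul]
    | smul t x _ hx => simp [hx, ← TensorProduct.smul_tmul', smul_comm t]
    | mem x hx => obtain ⟨w, rfl, rfl⟩ := hx; exact opB_word_tmul q v w d

theorem opB_one_tmul (y d : TV θ) : opB q y (1 ⊗ₜ d) = 1 ⊗ₜ (y * d) := by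
  induction y using word_induction with
  | word v => simpa using opB_word_tmul q v [] d
  | zero => simp
  | add x y hx hy => simp [hx, hy, add_mul, TensorProduct.tmul_add]
  | smul c x hx => simp [hx]

theorem opB_gen_mul_opA (m : Fin θ) (y : TV θ) :
    opB q (gen θ m) * opA θ y = opA θ (twistL q m y) * opB q (gen θ m) := by
  apply TensorProduct.ext'
  intro c d
  simp

theorem opB_mul_opA_gen (y : TV θ) (m : Fin θ) :
    opB q y * opA θ (gen θ m) = opA θ (gen θ m) * opB q (twistR q m y) := by
  induction y using word_induction with
  | word v =>
    apply tensor_ext_word_left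
    intro w d
    rw [twistR_word, Module.End.mul_apply, Module.End.mul_apply, opA_tmul, ← wordElem_cons,
      opB_word_tmul, map_smul, LinearMap.smul_apply, opB_word_tmul]
    simp [qf_add_right, smul_smul]
  | zero => simp
  | add x y hx hy => simp [hx, hy, add_mul, mul_add]
  | smul c x hx => simp [hx]

theorem opB_mul_opA {a b : Fin θ → ℕ} {x y : TV θ} (hx : x ∈ homogD θ a) (hy : y ∈ homogD θ b) :
    opB q x * opA θ y = qf q a b • (opA θ y * opB q x) := by
  apply tensor_ext_word_left
  intro w d
  have hw := wordElem_mem_homogD w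
  simp only [Module.End.mul_apply, opA_tmul, LinearMap.smul_apply]
  rw [opB_tmul q hx (mul_mem_homogD hy hw), opB_tmul q hx hw]
  simp [qf_add_right, smul_smul]

theorem BraidedStr.Δ_apply {q : Fin θ → Fin θ → ℂˣ} (S : BraidedStr θ q) (x : TV θ) :
    S.Δ x = opL q x (1 ⊗ₜ 1) := by
  have key : ∀ (m : Fin θ) (z), S.mulB (S.Δ (gen θ m)) z = opL q (gen θ m) z := by
    intro m z
    refine LinearMap.congr_fun (tensor_ext_word_left (f := S.mulB (S.Δ (gen θ m))) ?_) z
    intro w d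
    have h1 := S.mulB_spec (gen θ m) d [] w
    have h2 := S.mulB_spec 1 d [m] w
    simp only [wordElem_nil, wordElem_singleton, degW_cons, degW_nil] at h1 h2
    rw [S.Δ_gen, map_add, LinearMap.add_apply, h1, h2]
    simp [twistL_word, TensorProduct.smul_tmul']
  induction x using word_induction with
  | word v =>
    induction v with
    | nil => simp [S.Δ_one]
    | cons m v ih => rw [wordElem_cons, S.Δ_mul, ih, key, map_mul, Module.End.mul_apply]
  | zero => simp
  | add x y hx hy => simp [hx, hy]
  | smul c x hx => simp [hx]

/-- The braided bialgebra structure on `T(V)` exists for every braiding matrix. -/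
def braidedStr : BraidedStr θ q :=
  have key : ∀ (u : TV θ), TensorProduct.lift
      ((LinearMap.mul ℂ _).compl₁₂ (opA θ).toLinearMap (opB q).toLinearMap)
        (opL q u (1 ⊗ₜ 1)) = opL q u := by
    set mulB := TensorProduct.lift
      ((LinearMap.mul ℂ _).compl₁₂ (opA θ).toLinearMap (opB q).toLinearMap)
    have step : ∀ m z, mulB (opL q (gen θ m) z) = opL q (gen θ m) * mulB z := by
      intro m z
      induction z with
      | zero => simp
      | add x y hx hy => simp only [map_add, hx, hy, mul_add]
      | tmul a b =>
        simp [mulB, add_mul, ← mul_assoc, opB_gen_mul_opA]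
    intro u
    induction u using word_induction with
    | word v =>
      induction v with
      | nil => simp [mulB]
      | cons m v ih => rw [wordElem_cons, map_mul, Module.End.mul_apply, step, ih]
    | zero => simp
    | add x y hx hy => rw [map_add, LinearMap.add_apply, map_add, hx, hy]
    | smul c x hx => rw [map_smul, LinearMap.smul_apply, map_smul, hx]
  { Δ := LinearMap.applyₗ (1 ⊗ₜ 1) ∘ₗ (opL q).toLinearMap
    mulB := TensorProduct.lift
      ((LinearMap.mul ℂ _).compl₁₂ (opA θ).toLinearMap (opB q).toLinearMap)
    mulB_spec := fun a d wb wc => by simp [opB_word_tmul]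
    Δ_one := by simp
    Δ_gen := fun i => by simp
    Δ_mul := fun u v => by
      have := key u
      simp only [LinearMap.comp_apply, LinearMap.applyₗ_apply_apply, AlgHom.toLinearMap_apply,
        this, map_mul, Module.End.mul_apply] }

end Operators

section Stability

variable {θ : ℕ}

theorem mixedPair_le {I J : Submodule ℂ (TV θ)} {P : Submodule ℂ (TV θ ⊗[ℂ] TV θ)}
    (h1 : ∀ a ∈ I, ∀ b, a ⊗ₜ b ∈ P) (h2 : ∀ a, ∀ b ∈ J, a ⊗ₜ b ∈ P) : mixedPair I J ≤ P := by
  rw [mixedPair, Submodule.span_le]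
  rintro _ (⟨a, b, ha, rfl⟩ | ⟨a, b, hb, rfl⟩)
  exacts [h1 a ha b, h2 a b hb]

theorem tmul_mem_mixedSub_left {I : Submodule ℂ (TV θ)} {a : TV θ} (ha : a ∈ I) (b : TV θ) :
    a ⊗ₜ b ∈ mixedSub I :=
  Submodule.subset_span (Or.inl ⟨a, b, ha, rfl⟩)

theorem tmul_mem_mixedSub_right {I : Submodule ℂ (TV θ)} (a : TV θ) {b : TV θ} (hb : b ∈ I) :
    a ⊗ₜ b ∈ mixedSub I :=
  Submodule.subset_span (Or.inr ⟨a, b, hb, rfl⟩)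

/-- The algebra map `T(V) → ℂ[ε]` recording the constant term and the coefficient of `x_m`. -/
def coordHom (m : Fin θ) : TV θ →ₐ[ℂ] DualNumber ℂ :=
  FreeAlgebra.lift ℂ fun l => if l = m then DualNumber.eps else 0

/-- The counit of `T(V)`. -/
def counit : TV θ →ₐ[ℂ] ℂ := FreeAlgebra.lift ℂ fun _ => 0

/-- The coefficient of `x_m`. -/
def coord (m : Fin θ) : TV θ →ₗ[ℂ] ℂ := TrivSqZeroExt.sndHom ℂ ℂ ∘ₗ (coordHom m).toLinearMap

@[simp] theorem counit_gen (l : Fin θ) : counit (gen θ l) = 0 := by simp [counit, gen]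

theorem fst_coordHom (m : Fin θ) (x : TV θ) : (coordHom m x).fst = counit x := by
  have : (TrivSqZeroExt.fstHom ℂ ℂ ℂ).comp (coordHom m) = counit := by
    apply FreeAlgebra.hom_ext
    ext l
    by_cases h : l = m <;> simp [coordHom, counit, h]
  exact DFunLike.congr_fun this x

theorem coord_gen (m l : Fin θ) : coord m (gen θ l) = if l = m then 1 else 0 := by
  by_cases h : l = m <;> simp [coord, coordHom, gen, h]

@[simp] theorem coord_one (m : Fin θ) : coord m (1 : TV θ) = 0 := by simp [coord]

theorem coord_mul (m : Fin θ) (x y : TV θ) :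
    coord m (x * y) = counit x * coord m y + coord m x * counit y := by
  simp [coord, TrivSqZeroExt.snd_mul, fst_coordHom, mul_comm]

theorem coord_homogTot (m : Fin θ) {n : ℕ} (hn : 2 ≤ n) {x : TV θ} (hx : x ∈ homogTot θ n) :
    coord m x = 0 := by
  induction hx using Submodule.span_induction with
  | zero => simp
  | add x y _ _ hx hy => simp [hx, hy]
  | smul t x _ hx => simp [hx]
  | mem x hx =>
    obtain ⟨w, hw, rfl⟩ := hx
    match w, hw with
    | [], hw => simp at hw; omega
    | [_], hw => simp at hw; omega
    | a :: b :: w, _ => simp [coord_mul]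

theorem counit_homogTot {n : ℕ} (hn : 1 ≤ n) {x : TV θ} (hx : x ∈ homogTot θ n) :
    counit x = 0 := by
  induction hx using Submodule.span_induction with
  | zero => simp
  | add x y _ _ hx hy => simp [hx, hy]
  | smul t x _ hx => simp [hx]
  | mem x hx =>
    obtain ⟨w, hw, rfl⟩ := hx
    match w, hw with
    | [], hw => simp at hw; omega
    | a :: w, _ => simp

variable {q : Fin θ → Fin θ → ℂˣ} {S : BraidedStr θ q} {I : Submodule ℂ (TV θ)}

theorem IsPreNicholsIdeal.coord_eq_zero (hI : IsPreNicholsIdeal S I) (m : Fin θ) {x : TV θ}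
    (hx : x ∈ I) : coord m x = 0 := by
  rw [hI.homog_ge2] at hx
  induction hx using Submodule.span_induction with
  | zero => simp
  | add x y _ _ hx hy => simp [hx, hy]
  | smul t x _ hx => simp [hx]
  | mem x hx => obtain ⟨-, n, hn, hx⟩ := hx; exact coord_homogTot m hn hx

theorem IsPreNicholsIdeal.counit_eq_zero (hI : IsPreNicholsIdeal S I) {x : TV θ}
    (hx : x ∈ I) : counit x = 0 := by
  rw [hI.homog_ge2] at hx
  induction hx using Submodule.span_induction with
  | zero => simp
  | add x y _ _ hx hy => simp [hx, hy]
  | smul t x _ hx => simp [hx]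
  | mem x hx => obtain ⟨-, n, hn, hx⟩ := hx; exact counit_homogTot (by omega) hx

/-- Contraction of the left tensor factor with a functional. -/
def contrL (f : TV θ →ₗ[ℂ] ℂ) : TV θ ⊗[ℂ] TV θ →ₗ[ℂ] TV θ :=
  (TensorProduct.lid ℂ (TV θ)).toLinearMap ∘ₗ LinearMap.rTensor (TV θ) f

/-- Contraction of the right tensor factor with a functional. -/
def contrR (f : TV θ →ₗ[ℂ] ℂ) : TV θ ⊗[ℂ] TV θ →ₗ[ℂ] TV θ :=
  (TensorProduct.rid ℂ (TV θ)).toLinearMap ∘ₗ LinearMap.lTensor (TV θ) f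

@[simp] theorem contrL_tmul (f : TV θ →ₗ[ℂ] ℂ) (a b : TV θ) : contrL f (a ⊗ₜ b) = f a • b := rfl

@[simp] theorem contrR_tmul (f : TV θ →ₗ[ℂ] ℂ) (a b : TV θ) : contrR f (a ⊗ₜ b) = f b • a := rfl

theorem counit_twistL (m : Fin θ) (x : TV θ) : counit (twistL q m x) = counit x := by
  have : counit.comp (twistL q m) = counit := by
    apply FreeAlgebra.hom_ext
    ext l
    change counit (twistL q m (gen θ l)) = counit (gen θ l)
    simp
  exact DFunLike.congr_fun this x

theorem contrL_counit_Δ (x : TV θ) : contrL counit.toLinearMap (S.Δ x) = x := by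
  rw [S.Δ_apply]
  induction x using word_induction with
  | word v =>
    induction v with
    | nil => simp
    | cons m v ih =>
      have : contrL counit.toLinearMap ∘ₗ opL q (gen θ m)
          = LinearMap.mulLeft ℂ (gen θ m) ∘ₗ contrL counit.toLinearMap := by
        apply TensorProduct.ext'
        intro a b
        simp [counit_twistL]
      have := LinearMap.congr_fun this (opL q (wordElem θ v) (1 ⊗ₜ 1))
      simp only [LinearMap.comp_apply, ih, LinearMap.mulLeft_apply] at this
      rw [wordElem_cons, map_mul, Module.End.mul_apply, this]
  | zero => simp
  | add x y hx hy => simp [hx, hy]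
  | smul c x hx => simp [hx]

theorem contrR_counit_Δ (x : TV θ) : contrR counit.toLinearMap (S.Δ x) = x := by
  rw [S.Δ_apply]
  induction x using word_induction with
  | word v =>
    induction v with
    | nil => simp
    | cons m v ih =>
      have : contrR counit.toLinearMap ∘ₗ opL q (gen θ m)
          = LinearMap.mulLeft ℂ (gen θ m) ∘ₗ contrR counit.toLinearMap := by
        apply TensorProduct.ext'
        intro a b
        simp
      have := LinearMap.congr_fun this (opL q (wordElem θ v) (1 ⊗ₜ 1))
      simp only [LinearMap.comp_apply, ih, LinearMap.mulLeft_apply] at this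
      rw [wordElem_cons, map_mul, Module.End.mul_apply, this]
  | zero => simp
  | add x y hx hy => simp [hx, hy]
  | smul c x hx => simp [hx]

theorem IsPreNicholsIdeal.contrL_coord_mem (hI : IsPreNicholsIdeal S I) (m : Fin θ) {x : TV θ}
    (hx : x ∈ I) : contrL (coord m) (S.Δ x) ∈ I := by
  have : mixedSub I ≤ I.comap (contrL (coord m)) := mixedPair_le
    (fun a ha b => by simp [hI.coord_eq_zero m ha])
    (fun a b hb => by simpa using I.smul_mem _ hb)
  exact this (hI.coideal x hx)

theorem IsPreNicholsIdeal.contrR_coord_mem (hI : IsPreNicholsIdeal S I) (m : Fin θ) {x : TV θ}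
    (hx : x ∈ I) : contrR (coord m) (S.Δ x) ∈ I := by
  have : mixedSub I ≤ I.comap (contrR (coord m)) := mixedPair_le
    (fun a ha b => by simpa using I.smul_mem _ ha)
    (fun a b hb => by simp [hI.coord_eq_zero m hb])
  exact this (hI.coideal x hx)

/-- A pre-Nichols ideal is stable under the twists: it is a braided subspace. -/
theorem IsPreNicholsIdeal.twistL_mem (hI : IsPreNicholsIdeal S I) (m : Fin θ) {x : TV θ}
    (hx : x ∈ I) : twistL q m x ∈ I := by
  have key : contrR (coord m) (S.Δ (gen θ m * x)) =
      gen θ m * contrR (coord m) (S.Δ x) + twistL q m x := by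
    have : contrR (coord m) ∘ₗ opL q (gen θ m) =
        LinearMap.mulLeft ℂ (gen θ m) ∘ₗ contrR (coord m)
          + (twistL q m).toLinearMap ∘ₗ contrR counit.toLinearMap := by
      apply TensorProduct.ext'
      intro a b
      simp [coord_mul, coord_gen]
    have := LinearMap.congr_fun this (S.Δ x)
    simp only [LinearMap.comp_apply, LinearMap.add_apply, contrR_counit_Δ] at this
    rw [S.Δ_apply, map_mul, Module.End.mul_apply, ← S.Δ_apply, this]
    rfl
  have h := I.sub_mem (hI.contrR_coord_mem m (hI.mul_left (gen θ m) x hx))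
    (hI.mul_left (gen θ m) _ (hI.contrR_coord_mem m hx))
  rwa [key, add_sub_cancel_left] at h

theorem IsPreNicholsIdeal.twistR_mem (hI : IsPreNicholsIdeal S I) (m : Fin θ) {x : TV θ}
    (hx : x ∈ I) : twistR q m x ∈ I := by
  have key : contrL (coord m) (S.Δ (x * gen θ m)) =
      twistR q m x + contrL (coord m) (S.Δ x) * gen θ m := by
    have : contrL (coord m) ∘ₗ S.mulB.flip (S.Δ (gen θ m)) =
        (twistR q m).toLinearMap ∘ₗ contrL counit.toLinearMap
          + LinearMap.mulRight ℂ (gen θ m) ∘ₗ contrL (coord m) := by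
      apply TensorProduct.ext
      ext a : 1
      apply linearMap_ext_word
      intro w
      have h1 := S.mulB_spec a 1 w [m]
      have h2 := S.mulB_spec a (gen θ m) w []
      simp only [wordElem_nil, wordElem_singleton, degW_cons, degW_nil, add_zero] at h1 h2
      simp only [S.Δ_gen]
      simp only [map_add]
      simp [twistR_word, smul_smul, mul_comm]
      rw [h1, h2]
      simp [coord_mul, coord_gen, smul_smul, mul_comm, qf_zero_right]
    have := LinearMap.congr_fun this (S.Δ x)
    simp only [LinearMap.comp_apply, LinearMap.add_apply, contrL_counit_Δ,
      LinearMap.flip_apply] at this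
    rw [S.Δ_mul, this]
    rfl
  have h := I.sub_mem (hI.contrL_coord_mem m (hI.mul_right (gen θ m) x hx))
    (hI.mul_right (gen θ m) _ (hI.contrL_coord_mem m hx))
  rwa [key, add_sub_cancel_right] at h

theorem IsPreNicholsIdeal.opA_mem (hI : IsPreNicholsIdeal S I) (y : TV θ) :
    mixedSub I ≤ (mixedSub I).comap (opA θ y) :=
  mixedPair_le (fun a ha b => tmul_mem_mixedSub_left (hI.mul_left y a ha) b)
    (fun _ _ hb => tmul_mem_mixedSub_right _ hb)

theorem IsPreNicholsIdeal.opB_gen_mem (hI : IsPreNicholsIdeal S I) (m : Fin θ) :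
    mixedSub I ≤ (mixedSub I).comap (opB q (gen θ m)) :=
  mixedPair_le
    (fun a ha b => by simpa using tmul_mem_mixedSub_left (hI.twistL_mem m ha) _)
    (fun a b hb => by simpa using tmul_mem_mixedSub_right _ (hI.mul_left _ _ hb))

theorem opA_apply_mem (hI : IsPreNicholsIdeal S I) {y : TV θ} (hy : y ∈ I)
    (z : TV θ ⊗[ℂ] TV θ) : opA θ y z ∈ mixedSub I := by
  induction z with
  | zero => simp
  | add a b ha hb => rw [map_add]; exact Submodule.add_mem _ ha hb
  | tmul c d => exact tmul_mem_mixedSub_left (hI.mul_right c y hy) d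

theorem opB_apply_mem (hI : IsPreNicholsIdeal S I) {y : TV θ} (hy : y ∈ I)
    (z : TV θ ⊗[ℂ] TV θ) : opB q y z ∈ mixedSub I := by
  induction z with
  | zero => simp
  | add a b ha hb => rw [map_add]; exact Submodule.add_mem _ ha hb
  | tmul c d =>
    induction c using word_induction with
    | word w =>
      induction w generalizing y with
      | nil =>
        rw [wordElem_nil, opB_one_tmul]
        exact tmul_mem_mixedSub_right _ (hI.mul_right _ _ hy)
      | cons m w ih =>
        have := LinearMap.congr_fun (opB_mul_opA_gen q y m) (wordElem θ w ⊗ₜ d)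
        rw [Module.End.mul_apply, opA_tmul, Module.End.mul_apply] at this
        rw [wordElem_cons, this]
        exact hI.opA_mem _ (ih (hI.twistR_mem m hy))
    | zero => simp
    | add x y hx hy => simpa [TensorProduct.add_tmul] using Submodule.add_mem _ hx hy
    | smul t x hx => simpa [← TensorProduct.smul_tmul'] using Submodule.smul_mem _ t hx

end Stability

section Quotient

variable {θ : ℕ} {q : Fin θ → Fin θ → ℂˣ} {S : BraidedStr θ q} {I : Submodule ℂ (TV θ)}

/-- Operators on `N` indexed by `T(V)` whose generators preserve `P` act on `N ⧸ P`. -/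
def descend {N : Type*} [AddCommGroup N] [Module ℂ N] (F : TV θ →ₐ[ℂ] Module.End ℂ N)
    (P : Submodule ℂ N) (h : ∀ m, P ≤ P.comap (F (gen θ m))) :
    TV θ →ₐ[ℂ] Module.End ℂ (N ⧸ P) :=
  FreeAlgebra.lift ℂ fun m => P.mapQ P (F (gen θ m)) (h m)

theorem descend_mkQ {N : Type*} [AddCommGroup N] [Module ℂ N] (F : TV θ →ₐ[ℂ] Module.End ℂ N)
    (P : Submodule ℂ N) (h : ∀ m, P ≤ P.comap (F (gen θ m))) (y : TV θ) (z : N) :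
    descend F P h y (P.mkQ z) = P.mkQ (F y z) := by
  induction y using word_induction generalizing z with
  | word v =>
    induction v with
    | nil => simp
    | cons m v ih =>
      rw [wordElem_cons, map_mul, Module.End.mul_apply, ih]
      simp [descend, gen]
  | zero => simp
  | add x y hx hy => simp only [map_add, LinearMap.add_apply, hx, hy]
  | smul c x hx => simp only [map_smul, LinearMap.smul_apply, hx]

/-- `opA` on `(T(V) ⊗ T(V)) / (I ⊗ T(V) + T(V) ⊗ I)`. -/
def IsPreNicholsIdeal.quotA (hI : IsPreNicholsIdeal S I) :
    TV θ →ₐ[ℂ] Module.End ℂ ((TV θ ⊗[ℂ] TV θ) ⧸ mixedSub I) :=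
  descend (opA θ) (mixedSub I) fun m => hI.opA_mem (gen θ m)

/-- `opB` on `(T(V) ⊗ T(V)) / (I ⊗ T(V) + T(V) ⊗ I)`. -/
def IsPreNicholsIdeal.quotB (hI : IsPreNicholsIdeal S I) :
    TV θ →ₐ[ℂ] Module.End ℂ ((TV θ ⊗[ℂ] TV θ) ⧸ mixedSub I) :=
  descend (opB q) (mixedSub I) hI.opB_gen_mem

/-- `opL` on `(T(V) ⊗ T(V)) / (I ⊗ T(V) + T(V) ⊗ I)`. -/
def IsPreNicholsIdeal.quotL (hI : IsPreNicholsIdeal S I) :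
    TV θ →ₐ[ℂ] Module.End ℂ ((TV θ ⊗[ℂ] TV θ) ⧸ mixedSub I) :=
  FreeAlgebra.lift ℂ fun m => hI.quotA (gen θ m) + hI.quotB (gen θ m)

theorem IsPreNicholsIdeal.quotL_gen (hI : IsPreNicholsIdeal S I) (m : Fin θ) :
    hI.quotL (gen θ m) = hI.quotA (gen θ m) + hI.quotB (gen θ m) := by
  simp [quotL, gen]

theorem IsPreNicholsIdeal.quotA_mkQ (hI : IsPreNicholsIdeal S I) (y : TV θ)
    (z : TV θ ⊗[ℂ] TV θ) :
    hI.quotA y ((mixedSub I).mkQ z) = (mixedSub I).mkQ (opA θ y z) := descend_mkQ _ _ _ _ _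

theorem IsPreNicholsIdeal.quotB_mkQ (hI : IsPreNicholsIdeal S I) (y : TV θ)
    (z : TV θ ⊗[ℂ] TV θ) :
    hI.quotB y ((mixedSub I).mkQ z) = (mixedSub I).mkQ (opB q y z) := descend_mkQ _ _ _ _ _

theorem IsPreNicholsIdeal.quotL_mkQ (hI : IsPreNicholsIdeal S I) (y : TV θ)
    (z : TV θ ⊗[ℂ] TV θ) :
    hI.quotL y ((mixedSub I).mkQ z) = (mixedSub I).mkQ (opL q y z) := by
  induction y using word_induction generalizing z with
  | word v =>
    induction v with
    | nil => simp
    | cons m v ih =>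
      rw [wordElem_cons, map_mul, Module.End.mul_apply, ih, hI.quotL_gen, LinearMap.add_apply,
        hI.quotA_mkQ, hI.quotB_mkQ]
      simp
  | zero => simp
  | add x y hx hy => simp only [map_add, LinearMap.add_apply, hx, hy]
  | smul c x hx => simp only [map_smul, LinearMap.smul_apply, hx]

theorem IsPreNicholsIdeal.quotA_eq_zero (hI : IsPreNicholsIdeal S I) {y : TV θ} (hy : y ∈ I) :
    hI.quotA y = 0 := by
  refine LinearMap.ext fun z => ?_
  obtain ⟨z, rfl⟩ := (mixedSub I).mkQ_surjective z
  rw [hI.quotA_mkQ, LinearMap.zero_apply, Submodule.mkQ_apply, Submodule.Quotient.mk_eq_zero]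
  exact opA_apply_mem hI hy z

theorem IsPreNicholsIdeal.quotB_eq_zero (hI : IsPreNicholsIdeal S I) {y : TV θ} (hy : y ∈ I) :
    hI.quotB y = 0 := by
  refine LinearMap.ext fun z => ?_
  obtain ⟨z, rfl⟩ := (mixedSub I).mkQ_surjective z
  rw [hI.quotB_mkQ, LinearMap.zero_apply, Submodule.mkQ_apply, Submodule.Quotient.mk_eq_zero]
  exact opB_apply_mem hI hy z

theorem IsPreNicholsIdeal.quotB_mul_quotA (hI : IsPreNicholsIdeal S I) {a b : Fin θ → ℕ}
    {x y : TV θ} (hx : x ∈ homogD θ a) (hy : y ∈ homogD θ b) :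
    hI.quotB x * hI.quotA y = qf q a b • (hI.quotA y * hI.quotB x) := by
  refine LinearMap.ext fun z => ?_
  obtain ⟨z, rfl⟩ := (mixedSub I).mkQ_surjective z
  have := LinearMap.congr_fun (opB_mul_opA q hx hy) z
  simp only [Module.End.mul_apply, LinearMap.smul_apply] at this ⊢
  rw [hI.quotA_mkQ, hI.quotB_mkQ, hI.quotB_mkQ, hI.quotA_mkQ, this, map_smul]

/-- `y` is primitive in the pre-Nichols algebra `T(V)/I`, expressed as an identity between left
multiplication operators of the braided tensor square. -/
def IsPreNicholsIdeal.Prim (hI : IsPreNicholsIdeal S I) (y : TV θ) : Prop :=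
  hI.quotL y = hI.quotA y + hI.quotB y

end Quotient

section LinearAlgebra

theorem exists_factor_of_ker_le {V W U : Type*} [AddCommGroup V] [Module ℂ V] [AddCommGroup W]
    [Module ℂ W] [AddCommGroup U] [Module ℂ U] (f : V →ₗ[ℂ] W) (g : V →ₗ[ℂ] U)
    (h : LinearMap.ker f ≤ LinearMap.ker g) : ∃ k : W →ₗ[ℂ] U, k ∘ₗ f = g := by
  obtain ⟨k, hk⟩ := LinearMap.exists_extend
    ((LinearMap.ker f).liftQ g h ∘ₗ f.quotKerEquivRange.symm.toLinearMap)
  refine ⟨k, LinearMap.ext fun x => ?_⟩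
  have h1 := LinearMap.congr_fun hk (f.quotKerEquivRange (Submodule.Quotient.mk x))
  simp only [LinearMap.comp_apply, LinearEquiv.coe_coe, LinearEquiv.symm_apply_apply] at h1
  exact h1

theorem mem_mixedSub_of_map_mkQ {θ : ℕ} {K : Submodule ℂ (TV θ)} {z : TV θ ⊗[ℂ] TV θ}
    (hz : TensorProduct.map K.mkQ K.mkQ z = 0) : z ∈ mixedSub K := by
  have hz : z ∈ LinearMap.ker (TensorProduct.map K.mkQ K.mkQ) := hz
  rw [TensorProduct.map_ker (LinearMap.exact_subtype_mkQ K) K.mkQ_surjective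
    (LinearMap.exact_subtype_mkQ K) K.mkQ_surjective] at hz
  refine (sup_le ?_ ?_ : _ ≤ mixedSub K) hz
  · rintro _ ⟨t, rfl⟩
    induction t with
    | zero => simp
    | add a b ha hb => rw [map_add]; exact Submodule.add_mem _ ha hb
    | tmul a b => exact tmul_mem_mixedSub_right a b.2
  · rintro _ ⟨t, rfl⟩
    induction t with
    | zero => simp
    | add a b ha hb => rw [map_add]; exact Submodule.add_mem _ ha hb
    | tmul a b => exact tmul_mem_mixedSub_left a.2 b

end LinearAlgebra

section Filtration

variable {r : ℕ}

/-- The span of the words of length `< n`. -/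
def lowerDeg (r n : ℕ) : Submodule ℂ (TV r) :=
  Submodule.span ℂ {x | ∃ w : List (Fin r), w.length < n ∧ x = wordElem r w}

/-- The span of the tensors `v ⊗ w` of words of total length `n`. -/
def tensorDeg (r n : ℕ) : Submodule ℂ (TV r ⊗[ℂ] TV r) :=
  Submodule.span ℂ {z | ∃ v w : List (Fin r), v.length + w.length = n ∧
    z = wordElem r v ⊗ₜ wordElem r w}

theorem homogTot_le_lowerDeg {m n : ℕ} (h : m < n) : homogTot r m ≤ lowerDeg r n :=
  Submodule.span_mono fun _ ⟨w, hw, hx⟩ => ⟨w, hw ▸ h, hx⟩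

theorem mul_mem_lowerDeg {m n : ℕ} (w : List (Fin r)) (hw : w.length = m) {x : TV r}
    (hx : x ∈ lowerDeg r n) :
    wordElem r w * x ∈ lowerDeg r (n + m) ∧ x * wordElem r w ∈ lowerDeg r (n + m) := by
  induction hx using Submodule.span_induction with
  | zero => simp
  | add x y _ _ hx hy =>
    rw [mul_add, add_mul]
    exact ⟨Submodule.add_mem _ hx.1 hy.1, Submodule.add_mem _ hx.2 hy.2⟩
  | smul t x _ hx =>
    rw [mul_smul_comm, smul_mul_assoc]
    exact ⟨Submodule.smul_mem _ t hx.1, Submodule.smul_mem _ t hx.2⟩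
  | mem x hx =>
    obtain ⟨v, hv, rfl⟩ := hx
    exact ⟨Submodule.subset_span ⟨w ++ v, by simp; omega, (wordElem_append w v).symm⟩,
      Submodule.subset_span ⟨v ++ w, by simp; omega, (wordElem_append v w).symm⟩⟩

theorem opL_gen_mem_tensorDeg (q : Fin r → Fin r → ℂˣ) (a : Fin r) {n : ℕ}
    {z : TV r ⊗[ℂ] TV r} (hz : z ∈ tensorDeg r n) : opL q (gen r a) z ∈ tensorDeg r (n + 1) := by
  induction hz using Submodule.span_induction with
  | zero => simp
  | add x y _ _ hx hy => rw [map_add]; exact Submodule.add_mem _ hx hy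
  | smul t x _ hx => rw [map_smul]; exact Submodule.smul_mem _ t hx
  | mem x hx =>
    obtain ⟨v, w, rfl, rfl⟩ := hx
    rw [opL_gen, LinearMap.add_apply, opA_tmul, opB_gen_tmul, twistL_word,
      ← TensorProduct.smul_tmul']
    refine Submodule.add_mem _ (Submodule.subset_span ⟨a :: v, w, ?_, ?_⟩)
      (Submodule.smul_mem _ _ (Submodule.subset_span ⟨v, a :: w, ?_, ?_⟩))
    · simp; omega
    · simp
    · simp; omega
    · simp

theorem Δ_mem_tensorDeg {q : Fin r → Fin r → ℂˣ} (S : BraidedStr r q) {n : ℕ} {x : TV r}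
    (hx : x ∈ homogTot r n) : S.Δ x ∈ tensorDeg r n := by
  rw [S.Δ_apply]
  induction hx using Submodule.span_induction with
  | zero => simp
  | add x y _ _ hx hy => rw [map_add]; exact Submodule.add_mem _ hx hy
  | smul t x _ hx => rw [map_smul]; exact Submodule.smul_mem _ t hx
  | mem x hx =>
    obtain ⟨w, rfl, rfl⟩ := hx
    induction w with
    | nil => exact Submodule.subset_span ⟨[], [], rfl, by simp⟩
    | cons a w ih =>
      rw [wordElem_cons, map_mul, Module.End.mul_apply]
      exact opL_gen_mem_tensorDeg q a ih

instance (n : ℕ) : Module.Finite ℂ (Wfil r n) :=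
  Module.Finite.iff_fg.2 (Submodule.fg_span (((List.finite_length_le (Fin r) n).image
    (wordElem r)).subset fun _ ⟨w, hw, hx⟩ => ⟨w, hw, hx.symm⟩))

theorem homogTot_le_Wfil {m n : ℕ} (h : m ≤ n) : homogTot r m ≤ Wfil r n :=
  Submodule.span_mono fun _ ⟨w, hw, hx⟩ => ⟨w, hw ▸ h, hx⟩

instance (n : ℕ) : Module.Finite ℂ (homogTot r n) :=
  Submodule.finiteDimensional_of_le (homogTot_le_Wfil le_rfl)

theorem Wfil_le_sup (n : ℕ) : Wfil r (n + 1) ≤ Wfil r n ⊔ homogTot r (n + 1) := by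
  rw [Wfil, Submodule.span_le]
  rintro _ ⟨w, hw, rfl⟩
  rcases Nat.lt_or_ge w.length (n + 1) with h | h
  · exact Submodule.mem_sup_left (Submodule.subset_span ⟨w, by omega, rfl⟩)
  · exact Submodule.mem_sup_right (Submodule.subset_span ⟨w, by omega, rfl⟩)

theorem finrank_map_Wfil_le {U : Type*} [AddCommGroup U] [Module ℂ U] (f : TV r →ₗ[ℂ] U) (n : ℕ)
    (B : ℕ) (hB : ∀ m ≤ n, Module.finrank ℂ ((homogTot r m).map f) ≤ B) :
    Module.finrank ℂ ((Wfil r n).map f) ≤ (n + 1) * B := by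
  induction n with
  | zero =>
    have h : Wfil r 0 ≤ homogTot r 0 :=
      Submodule.span_mono fun _ ⟨w, hw, hx⟩ => ⟨w, Nat.le_zero.1 hw, hx⟩
    calc _ ≤ Module.finrank ℂ ((homogTot r 0).map f) :=
          Submodule.finrank_mono (Submodule.map_mono h)
      _ ≤ _ := by simpa using hB 0 le_rfl
  | succ n ih =>
    calc _ ≤ Module.finrank ℂ ↥((Wfil r n).map f ⊔ (homogTot r (n + 1)).map f) := by
          rw [← Submodule.map_sup]
          exact Submodule.finrank_mono (Submodule.map_mono (Wfil_le_sup n))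
      _ ≤ _ := Submodule.finrank_add_le_finrank_add_finrank _ _
      _ ≤ (n + 1) * B + B := add_le_add (ih fun m hm => hB m (by omega)) (hB _ le_rfl)
      _ = _ := by ring

end Filtration

section GradedKernel

variable {θ r : ℕ} {q : Fin θ → Fin θ → ℂˣ} {S : BraidedStr θ q} {I : Submodule ℂ (TV θ)}

/-- The filtration steps `I + φ(T(V')_{< n})`, where `φ` sends the generators to the `p a`. -/
def filtStep (I : Submodule ℂ (TV θ)) (p : Fin r → TV θ) (n : ℕ) : Submodule ℂ (TV θ) :=
  I ⊔ (lowerDeg r n).map (FreeAlgebra.lift ℂ p).toLinearMap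

/-- The kernel of the map from `T(V')` to the graded algebra attached to the filtration of the
subalgebra of `T(V)/I` generated by the `p a`. -/
def gradedKer (I : Submodule ℂ (TV θ)) (p : Fin r → TV θ) : Submodule ℂ (TV r) :=
  Submodule.span ℂ {x | ∃ n, 2 ≤ n ∧ x ∈ homogTot r n ∧ FreeAlgebra.lift ℂ p x ∈ filtStep I p n}

theorem lift_word_mem_homogD {p : Fin r → TV θ} {β : Fin r → Fin θ → ℕ}
    (hp : ∀ a, p a ∈ homogD θ (β a)) (w : List (Fin r)) :
    FreeAlgebra.lift ℂ p (wordElem r w) ∈ homogD θ (w.map β).sum := by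
  induction w with
  | nil => simpa using one_mem_homogD
  | cons a w ih => simpa [gen] using mul_mem_homogD (hp a) ih

theorem qf_sum_map {β : Fin r → Fin θ → ℕ} {q' : Fin r → Fin r → ℂˣ}
    (hq' : ∀ a b, (q' a b : ℂ) = qf q (β a) (β b)) (a : Fin r) (w : List (Fin r)) :
    qf q (β a) (w.map β).sum = qf q' (δ r a) (degW r w) := by
  induction w with
  | nil => simp
  | cons b w ih => simp [qf_add_right, ih, hq']

theorem map_opL_gen (hI : IsPreNicholsIdeal S I) {p : Fin r → TV θ} {β : Fin r → Fin θ → ℕ}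
    (hp : ∀ a, p a ∈ homogD θ (β a)) (hprim : ∀ a, hI.Prim (p a)) {q' : Fin r → Fin r → ℂˣ}
    (hq' : ∀ a b, (q' a b : ℂ) = qf q (β a) (β b)) (a : Fin r) (z : TV r ⊗[ℂ] TV r) :
    (mixedSub I).mkQ (TensorProduct.map (FreeAlgebra.lift ℂ p).toLinearMap
        (FreeAlgebra.lift ℂ p).toLinearMap (opL q' (gen r a) z)) =
      hI.quotL (p a) ((mixedSub I).mkQ (TensorProduct.map (FreeAlgebra.lift ℂ p).toLinearMap
        (FreeAlgebra.lift ℂ p).toLinearMap z)) := by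
  rw [hprim a, LinearMap.add_apply, hI.quotA_mkQ, hI.quotB_mkQ, ← map_add, opL_gen,
    LinearMap.add_apply, map_add]
  congr 2
  · induction z with
    | zero => simp
    | add x y hx hy => simp only [map_add, hx, hy]
    | tmul c d => simp [gen]
  · induction z with
    | zero => simp
    | add x y hx hy => simp only [map_add, hx, hy]
    | tmul c d =>
      induction c using word_induction with
      | zero => simp
      | add x y hx hy => simp only [TensorProduct.add_tmul, map_add, hx, hy]
      | smul t x hx => simp only [← TensorProduct.smul_tmul', map_smul, hx]
      | word w =>
        rw [opB_gen_tmul, twistL_word, TensorProduct.map_tmul, TensorProduct.map_tmul]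
        simp only [AlgHom.toLinearMap_apply]
        rw [opB_tmul q (hp a) (lift_word_mem_homogD hp w), qf_sum_map hq']
        simp [gen, TensorProduct.smul_tmul']

theorem map_Δ_lift (hI : IsPreNicholsIdeal S I) {p : Fin r → TV θ} {β : Fin r → Fin θ → ℕ}
    (hp : ∀ a, p a ∈ homogD θ (β a)) (hprim : ∀ a, hI.Prim (p a)) {q' : Fin r → Fin r → ℂˣ}
    (hq' : ∀ a b, (q' a b : ℂ) = qf q (β a) (β b)) (S' : BraidedStr r q') (x : TV r) :
    (mixedSub I).mkQ (TensorProduct.map (FreeAlgebra.lift ℂ p).toLinearMap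
        (FreeAlgebra.lift ℂ p).toLinearMap (S'.Δ x)) =
      (mixedSub I).mkQ (S.Δ (FreeAlgebra.lift ℂ p x)) := by
  rw [S'.Δ_apply, S.Δ_apply, ← hI.quotL_mkQ]
  induction x using word_induction with
  | zero => simp
  | add x y hx hy => simp only [map_add, LinearMap.add_apply, hx, hy]
  | smul t x hx => simp only [map_smul, LinearMap.smul_apply, hx]
  | word w =>
    induction w with
    | nil => simp
    | cons a w ih =>
      rw [wordElem_cons, map_mul, Module.End.mul_apply, map_opL_gen hI hp hprim hq', ih, map_mul,
        map_mul, Module.End.mul_apply]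
      simp [gen]

theorem gradedKer_mul (hI : IsPreNicholsIdeal S I) (p : Fin r → TV θ) (a x : TV r)
    (hx : x ∈ gradedKer I p) : a * x ∈ gradedKer I p ∧ x * a ∈ gradedKer I p := by
  induction hx using Submodule.span_induction with
  | zero => simp
  | add x y _ _ hx hy =>
    rw [mul_add, add_mul]
    exact ⟨Submodule.add_mem _ hx.1 hy.1, Submodule.add_mem _ hx.2 hy.2⟩
  | smul t x _ hx =>
    rw [mul_smul_comm, smul_mul_assoc]
    exact ⟨Submodule.smul_mem _ t hx.1, Submodule.smul_mem _ t hx.2⟩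
  | mem x hx =>
    obtain ⟨n, hn, hx, hφ⟩ := hx
    induction a using word_induction with
    | zero => simp
    | add a b ha hb =>
      rw [mul_add, add_mul]
      exact ⟨Submodule.add_mem _ ha.1 hb.1, Submodule.add_mem _ ha.2 hb.2⟩
    | smul t a ha =>
      rw [mul_smul_comm, smul_mul_assoc]
      exact ⟨Submodule.smul_mem _ t ha.1, Submodule.smul_mem _ t ha.2⟩
    | word w =>
      obtain ⟨y, hy, _, ⟨u, hu, rfl⟩, h⟩ := Submodule.mem_sup.1 hφ
      have hu' := mul_mem_lowerDeg w rfl hu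
      refine ⟨Submodule.subset_span ⟨n + w.length, by omega, ?_, ?_⟩,
        Submodule.subset_span ⟨n + w.length, by omega, ?_, ?_⟩⟩
      · rw [add_comm]; exact mul_mem_homogTot (wordElem_mem_homogTot w) hx
      · rw [map_mul, ← h, mul_add]
        exact Submodule.add_mem_sup (hI.mul_left _ _ hy) ⟨_, hu'.1, by simp⟩
      · exact mul_mem_homogTot hx (wordElem_mem_homogTot w)
      · rw [map_mul, ← h, add_mul]
        exact Submodule.add_mem_sup (hI.mul_right _ _ hy) ⟨_, hu'.2, by simp⟩

theorem mem_gradedKer {p : Fin r → TV θ}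
    (hind : ∀ (c₀ : ℂ) (c : Fin r → ℂ), c₀ • 1 + ∑ a, c a • p a ∈ I → c₀ = 0 ∧ c = 0)
    {n : ℕ} {x : TV r} (hx : x ∈ homogTot r n)
    (hφ : FreeAlgebra.lift ℂ p x ∈ filtStep I p n) : x ∈ gradedKer I p := by
  rcases Nat.lt_or_ge n 2 with hn | hn
  · obtain ⟨y, hy, _, ⟨u, hu, rfl⟩, h⟩ := Submodule.mem_sup.1 hφ
    interval_cases n
    · have hx : x ∈ Submodule.span ℂ {(1 : TV r)} := by
        refine Submodule.span_mono ?_ hx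
        rintro z ⟨w, hw, rfl⟩
        simp [List.length_eq_zero_iff.1 hw]
      obtain ⟨c, rfl⟩ := Submodule.mem_span_singleton.1 hx
      have hu : u = 0 := by simpa [lowerDeg] using hu
      have := hind c 0 (by simp_all)
      simp [this.1]
    · have hx : x ∈ Submodule.span ℂ (Set.range (gen r)) := by
        refine Submodule.span_mono ?_ hx
        rintro z ⟨w, hw, rfl⟩
        obtain ⟨a, rfl⟩ := List.length_eq_one_iff.1 hw
        exact ⟨a, by simp⟩
      obtain ⟨c, rfl⟩ := (Submodule.mem_span_range_iff_exists_fun ℂ).1 hx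
      have hu : u ∈ Submodule.span ℂ {(1 : TV r)} := by
        refine Submodule.span_mono ?_ hu
        rintro z ⟨w, hw, rfl⟩
        simp [List.length_eq_zero_iff.1 (Nat.lt_one_iff.1 hw)]
      obtain ⟨c₀, rfl⟩ := Submodule.mem_span_singleton.1 hu
      have := hind (-c₀) c (by
        have : (-c₀) • (1 : TV θ) + ∑ a, c a • p a = y := by
          simp only [map_smul, map_one, AlgHom.toLinearMap_apply, map_sum, gen,
            FreeAlgebra.lift_ι_apply] at h
          rw [← h]; module
        rwa [this])
      simp [this.2]
  · exact Submodule.subset_span ⟨n, hn, hx, hφ⟩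

theorem exists_graded_section {p : Fin r → TV θ}
    (hind : ∀ (c₀ : ℂ) (c : Fin r → ℂ), c₀ • 1 + ∑ a, c a • p a ∈ I → c₀ = 0 ∧ c = 0) (n : ℕ) :
    ∃ ρ : TV θ →ₗ[ℂ] TV r ⧸ gradedKer I p, filtStep I p n ≤ LinearMap.ker ρ ∧
      ∀ x ∈ homogTot r n, ρ (FreeAlgebra.lift ℂ p x) = (gradedKer I p).mkQ x := by
  obtain ⟨k, hk⟩ := exists_factor_of_ker_le
    ((filtStep I p n).mkQ ∘ₗ (FreeAlgebra.lift ℂ p).toLinearMap ∘ₗ (homogTot r n).subtype)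
    ((gradedKer I p).mkQ ∘ₗ (homogTot r n).subtype) (fun x hx => by
      simp only [LinearMap.mem_ker, LinearMap.comp_apply, Submodule.mkQ_apply,
        Submodule.Quotient.mk_eq_zero, Submodule.subtype_apply, AlgHom.toLinearMap_apply] at hx ⊢
      exact mem_gradedKer hind x.2 hx)
  refine ⟨k ∘ₗ (filtStep I p n).mkQ, fun x hx => ?_, fun x hx => ?_⟩
  · rw [LinearMap.mem_ker, LinearMap.comp_apply, Submodule.mkQ_apply,
      (Submodule.Quotient.mk_eq_zero _).2 hx, map_zero]
  · exact LinearMap.congr_fun hk ⟨x, hx⟩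

theorem gradedKer_coideal (hI : IsPreNicholsIdeal S I) {p : Fin r → TV θ}
    {β : Fin r → Fin θ → ℕ} (hp : ∀ a, p a ∈ homogD θ (β a)) (hprim : ∀ a, hI.Prim (p a))
    (hind : ∀ (c₀ : ℂ) (c : Fin r → ℂ), c₀ • 1 + ∑ a, c a • p a ∈ I → c₀ = 0 ∧ c = 0)
    {q' : Fin r → Fin r → ℂˣ} (hq' : ∀ a b, (q' a b : ℂ) = qf q (β a) (β b))
    (S' : BraidedStr r q') {x : TV r} (hx : x ∈ gradedKer I p) :
    S'.Δ x ∈ mixedSub (gradedKer I p) := by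
  induction hx using Submodule.span_induction with
  | zero => simp
  | add x y _ _ hx hy => rw [map_add]; exact Submodule.add_mem _ hx hy
  | smul t x _ hx => rw [map_smul]; exact Submodule.smul_mem _ t hx
  | mem x hx =>
    obtain ⟨n, hn, hx, hφ⟩ := hx
    obtain ⟨y, hy, _, ⟨u, hu, rfl⟩, h⟩ := Submodule.mem_sup.1 hφ
    choose ρ hρker hρ using exists_graded_section hind
    set φ := (FreeAlgebra.lift ℂ p).toLinearMap with hφdef
    have hρ0 : ∀ m l, l < m → ∀ v : List (Fin r), v.length = l → ρ m (φ (wordElem r v)) = 0 :=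
      fun m l hl v hv => hρker m (Submodule.mem_sup_right
        ⟨_, homogTot_le_lowerDeg hl (hv ▸ wordElem_mem_homogTot v), rfl⟩)
    let Ψ := ∑ ab ∈ Finset.HasAntidiagonal.antidiagonal n, TensorProduct.map (ρ ab.1) (ρ ab.2)
    have hΨI : mixedSub I ≤ LinearMap.ker Ψ := by
      have h0 : ∀ m, ∀ z ∈ I, ρ m z = 0 := fun m z hz => hρker m (Submodule.mem_sup_left hz)
      refine mixedPair_le (fun a ha b => ?_) (fun a b hb => ?_)
      · simp [Ψ, LinearMap.sum_apply, h0 _ a ha]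
      · simp [Ψ, LinearMap.sum_apply, h0 _ b hb]
    have hΨtop : ∀ z ∈ tensorDeg r n, Ψ (TensorProduct.map φ φ z) =
        TensorProduct.map (gradedKer I p).mkQ (gradedKer I p).mkQ z := by
      intro z hz
      induction hz using Submodule.span_induction with
      | zero => simp
      | add x y _ _ hx hy => simp only [map_add, hx, hy]
      | smul t x _ hx => simp only [map_smul, hx]
      | mem z hz =>
        obtain ⟨v, w, hvw, rfl⟩ := hz
        simp only [Ψ, LinearMap.sum_apply, TensorProduct.map_tmul]
        rw [Finset.sum_eq_single (v.length, w.length)]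
        · rw [← hρ v.length _ (wordElem_mem_homogTot v), ← hρ w.length _ (wordElem_mem_homogTot w)]
          rfl
        · rintro ⟨a, b⟩ hab hne
          rw [Finset.HasAntidiagonal.mem_antidiagonal] at hab
          dsimp only at hab ⊢
          rcases lt_trichotomy v.length a with h1 | h1 | h1
          · rw [hρ0 a _ h1 v rfl, TensorProduct.zero_tmul]
          · exact absurd (by ext <;> dsimp only <;> omega) hne
          · rw [hρ0 b w.length (by omega) w rfl, TensorProduct.tmul_zero]
        · intro h; exact absurd (by simpa using hvw) h
    have hΨlow : ∀ l < n, ∀ z ∈ tensorDeg r l, Ψ (TensorProduct.map φ φ z) = 0 := by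
      intro l hl z hz
      induction hz using Submodule.span_induction with
      | zero => simp
      | add x y _ _ hx hy => simp only [map_add, hx, hy, add_zero]
      | smul t x _ hx => simp only [map_smul, hx, smul_zero]
      | mem z hz =>
        obtain ⟨v, w, hvw, rfl⟩ := hz
        simp only [Ψ, LinearMap.sum_apply, TensorProduct.map_tmul]
        refine Finset.sum_eq_zero ?_
        rintro ⟨a, b⟩ hab
        rw [Finset.HasAntidiagonal.mem_antidiagonal] at hab
        dsimp only at hab ⊢
        rcases Nat.lt_or_ge v.length a with h1 | h1
        · rw [hρ0 a _ h1 v rfl, TensorProduct.zero_tmul]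
        · rw [hρ0 b w.length (by omega) w rfl, TensorProduct.tmul_zero]
    have hlow : lowerDeg r n ≤ LinearMap.ker (Ψ ∘ₗ TensorProduct.map φ φ ∘ₗ S'.Δ) := by
      rw [lowerDeg, Submodule.span_le]
      rintro _ ⟨w, hw, rfl⟩
      exact hΨlow _ hw _ (Δ_mem_tensorDeg S' (wordElem_mem_homogTot w))
    have hu0 : Ψ (TensorProduct.map φ φ (S'.Δ u)) = 0 := hlow hu
    have hdiff : TensorProduct.map φ φ (S'.Δ x) - TensorProduct.map φ φ (S'.Δ u) ∈ mixedSub I := by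
      rw [← Submodule.Quotient.mk_eq_zero, Submodule.Quotient.mk_sub]
      have h1 := map_Δ_lift hI hp hprim hq' S' x
      have h2 := map_Δ_lift hI hp hprim hq' S' u
      simp only [Submodule.mkQ_apply, ← hφdef] at h1 h2
      rw [h1, h2, ← Submodule.Quotient.mk_sub, ← map_sub, Submodule.Quotient.mk_eq_zero]
      rw [← h]
      simpa [hφdef] using hI.coideal y hy
    apply mem_mixedSub_of_map_mkQ
    rw [← hΨtop _ (Δ_mem_tensorDeg S' hx), sub_eq_zero.1 ((map_sub Ψ _ _).symm.trans (hΨI hdiff)),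
      hu0]

theorem gradedKer_isPreNicholsIdeal (hI : IsPreNicholsIdeal S I) {p : Fin r → TV θ}
    {β : Fin r → Fin θ → ℕ} (hp : ∀ a, p a ∈ homogD θ (β a)) (hprim : ∀ a, hI.Prim (p a))
    (hind : ∀ (c₀ : ℂ) (c : Fin r → ℂ), c₀ • 1 + ∑ a, c a • p a ∈ I → c₀ = 0 ∧ c = 0)
    {q' : Fin r → Fin r → ℂˣ} (hq' : ∀ a b, (q' a b : ℂ) = qf q (β a) (β b))
    (S' : BraidedStr r q') : IsPreNicholsIdeal S' (gradedKer I p) where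
  mul_left a x hx := (gradedKer_mul hI p a x hx).1
  mul_right a x hx := (gradedKer_mul hI p a x hx).2
  homog_ge2 := by
    refine le_antisymm (Submodule.span_le.2 ?_) (Submodule.span_le.2 fun x hx => hx.1)
    rintro x ⟨n, hn, hx, hφ⟩
    exact Submodule.subset_span ⟨Submodule.subset_span ⟨n, hn, hx, hφ⟩, n, hn, hx⟩
  coideal x hx := gradedKer_coideal hI hp hprim hind hq' S' hx

theorem finrank_map_gradedKer_le {p : Fin r → TV θ} {β : Fin r → Fin θ → ℕ}
    (hp : ∀ a, p a ∈ homogD θ (β a))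
    (hind : ∀ (c₀ : ℂ) (c : Fin r → ℂ), c₀ • 1 + ∑ a, c a • p a ∈ I → c₀ = 0 ∧ c = 0)
    {L : ℕ} (hL : ∀ a, ∑ l, β a l ≤ L) (m : ℕ) :
    Module.finrank ℂ ((homogTot r m).map (gradedKer I p).mkQ) ≤
      Module.finrank ℂ ((Wfil θ (L * m)).map I.mkQ) := by
  obtain ⟨ρ, hρker, hρ⟩ := exists_graded_section hind m
  have hlen : ∀ w : List (Fin r), ∑ l, (w.map β).sum l ≤ L * w.length := by
    intro w
    induction w with
    | nil => simp
    | cons a w ih =>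
      have := hL a
      simp only [List.map_cons, List.sum_cons, Pi.add_apply, Finset.sum_add_distrib,
        List.length_cons, mul_add, mul_one]
      omega
  have hρI : I ≤ LinearMap.ker ρ := le_sup_left.trans hρker
  have hle : (homogTot r m).map (gradedKer I p).mkQ ≤
      ((Wfil θ (L * m)).map I.mkQ).map (I.liftQ ρ hρI) := by
    rw [homogTot, Submodule.map_span_le]
    rintro _ ⟨w, rfl, rfl⟩
    rw [← hρ _ (wordElem_mem_homogTot w)]
    refine ⟨_, ⟨FreeAlgebra.lift ℂ p (wordElem r w), ?_, rfl⟩, by simp⟩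
    refine homogTot_le_Wfil ?_ (homogD_le_homogTot _ (lift_word_mem_homogD hp w))
    exact hlen w
  exact (Submodule.finrank_mono hle).trans (Submodule.finrank_map_le _ _)

/-- A family of homogeneous primitive elements of a pre-Nichols algebra of finite GKdim, linearly
independent together with `1`, spans a braided vector space with finite root system. -/
theorem IsPreNicholsIdeal.finiteRootSystem (hI : IsPreNicholsIdeal S I) (hAAH : AAH)
    (hGK : FinGK I) {p : Fin r → TV θ} {β : Fin r → Fin θ → ℕ} (hp : ∀ a, p a ∈ homogD θ (β a))
    (hprim : ∀ a, hI.Prim (p a))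
    (hind : ∀ (c₀ : ℂ) (c : Fin r → ℂ), c₀ • 1 + ∑ a, c a • p a ∈ I → c₀ = 0 ∧ c = 0)
    {q' : Fin r → Fin r → ℂˣ} (hq' : ∀ a b, (q' a b : ℂ) = qf q (β a) (β b)) :
    FiniteRootSystem q' := by
  refine hAAH r q' (braidedStr q') ?_
  obtain ⟨C, d, hC⟩ := hGK
  have hK := gradedKer_isPreNicholsIdeal hI hp hprim hind hq' (braidedStr q')
  have hKJ : gradedKer I p ≤ Jq (braidedStr q') := le_sSup hK
  let L := ∑ a, ∑ l, β a l
  have hL : ∀ a, ∑ l, β a l ≤ L := fun a =>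
    Finset.single_le_sum (f := fun a => ∑ l, β a l) (fun _ _ => Nat.zero_le _) (Finset.mem_univ a)
  refine ⟨C * (L + 1) ^ d, d + 1, fun n => ?_⟩
  have h1 : (Wfil r n).map (Jq (braidedStr q')).mkQ =
      ((Wfil r n).map (gradedKer I p).mkQ).map (Submodule.factor hKJ) := by
    rw [← Submodule.map_comp, Submodule.factor_comp_mk]
  rw [h1]
  refine (Submodule.finrank_map_le _ _).trans ((finrank_map_Wfil_le _ n
    (C * (L * n + 1) ^ d) fun m hm => ?_).trans ?_)
  · refine ((finrank_map_gradedKer_le hp hind hL m).trans (hC _)).trans ?_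
    gcongr
  · calc (n + 1) * (C * (L * n + 1) ^ d) ≤ (n + 1) * (C * ((L + 1) * (n + 1)) ^ d) := by
          gcongr; nlinarith
      _ = _ := by rw [mul_pow]; ring

end GradedKernel

section Reflections

variable {n : ℕ} {q : Fin n → Fin n → ℂˣ} {i j k : Fin n}

theorem qtil_comm (i j : Fin n) : qtil q i j = qtil q j i := mul_comm _ _

theorem not_reflectable_of_one (hij : j ≠ i) (hi : (q i i : ℂ) = 1) (h : qtil q i j ≠ 1) :
    ¬ reflectable q i := by
  intro hr
  obtain ⟨m, hm⟩ := hr j hij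
  simp only [cSet, hi, qnum, one_pow, Finset.sum_const, Finset.card_range, nsmul_eq_mul, mul_one,
    one_mul, Set.mem_ofPred_eq, mul_eq_zero] at hm
  rcases hm with hm | hm
  · exact Nat.cast_add_one_ne_zero (R := ℂ) m (by exact_mod_cast hm)
  · exact h (sub_eq_zero.1 hm).symm

theorem cij_eq_zero (hij : i ≠ j) (h : qtil q i j = 1) : cij q i j = 0 := by
  have : sInf (cSet q i j) = 0 := Nat.sInf_eq_zero.2 (Or.inl (by simp [cSet, h]))
  simp [cij, hij, this]

theorem cij_eq_neg_one (hij : i ≠ j) (hi : (q i i : ℂ) = -1) (h : qtil q i j ≠ 1) :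
    cij q i j = -1 := by
  have h1 : 1 ∈ cSet q i j := by simp [cSet, hi, qnum, Finset.sum_range_succ]
  have h0 : 0 ∉ cSet q i j := by
    simpa [cSet, qnum, sub_eq_zero] using fun h' => h h'.symm
  have : sInf (cSet q i j) = 1 := by
    have hm := Nat.sInf_mem ⟨1, h1⟩
    have hle := Nat.sInf_le h1
    interval_cases hs : sInf (cSet q i j)
    · exact absurd hm h0
    · rfl
  simp [cij, hij, this]

theorem reflectMat_diag_of_ne_one (hij : i ≠ j) (hi : (q i i : ℂ) = -1) (h : qtil q i j ≠ 1) :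
    (reflectMat q i j j : ℂ) = -((q j j : ℂ) * qtil q i j) := by
  simp only [reflectMat, cij_eq_neg_one hij hi h, qtil]
  push_cast
  simp only [hi, zpow_one, mul_neg, mul_one]
  ring

theorem reflectMat_diag_of_eq_one (hij : i ≠ j) (h : qtil q i j = 1) :
    (reflectMat q i j j : ℂ) = q j j := by
  simp [reflectMat, cij_eq_zero hij h]

theorem qtil_reflectMat_self (hij : i ≠ j) (hi : (q i i : ℂ) = -1) (h : qtil q i j ≠ 1) :
    qtil (reflectMat q i) j i = (qtil q i j)⁻¹ := by
  have h1 : cij q i i = 2 := by simp [cij]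
  have a := (q i j).ne_zero
  have b := (q j i).ne_zero
  simp only [qtil, reflectMat, cij_eq_neg_one hij hi h, h1]
  push_cast
  simp only [hi]
  norm_num [zpow_neg]
  field_simp

theorem qtil_reflectMat_of_ne_one (hij : i ≠ j) (hik : i ≠ k) (hi : (q i i : ℂ) = -1)
    (h : qtil q i j ≠ 1) (h' : qtil q i k ≠ 1) :
    qtil (reflectMat q i) j k = qtil q j k * qtil q i j * qtil q i k := by
  simp only [qtil, reflectMat, cij_eq_neg_one hij hi h, cij_eq_neg_one hik hi h']
  push_cast
  simp only [hi]
  norm_num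
  ring

theorem qtil_reflectMat_of_eq_one (hij : i ≠ j) (hik : i ≠ k) (hi : (q i i : ℂ) = -1)
    (h : qtil q i j ≠ 1) (h' : qtil q i k = 1) :
    qtil (reflectMat q i) j k = qtil q j k := by
  rw [show qtil (reflectMat q i) j k = qtil q j k * qtil q i k by
    simp only [qtil, reflectMat, cij_eq_neg_one hij hi h, cij_eq_zero hik h']
    push_cast
    norm_num
    ring, h', mul_one]

theorem not_finiteRootSystem_of_reach {q' : Fin n → Fin n → ℂˣ} {β : Fin n → ℤ}
    (hr : ReachRoot q q' β) (hij : i ≠ j) (hi : (q' i i : ℂ) = -1) (h : qtil q' i j ≠ 1)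
    (hj : (q' j j : ℂ) * qtil q' i j = -1) : ¬ FiniteRootSystem q := by
  intro hf
  refine not_reflectable_of_one (q := reflectMat q' i) (i := j) (j := i) hij ?_ ?_
    (hf.1 _ j ⟨_, hr.reflect i⟩)
  · rw [reflectMat_diag_of_ne_one hij hi h, hj, neg_neg]
  · rw [qtil_reflectMat_self hij hi h]
    simpa using h

theorem cubeRoot_ne_one {ζ : ℂ} (hζ : ζ ^ 2 + ζ + 1 = 0) : ζ ≠ 1 := by
  rintro rfl; norm_num at hζ

theorem neg_cubeRoot_ne_one {ζ : ℂ} (hζ : ζ ^ 2 + ζ + 1 = 0) : -ζ ≠ 1 := by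
  intro h
  have : ζ = -1 := by linear_combination -h
  rw [this] at hζ; norm_num at hζ

theorem not_finiteRootSystem_chain {ζ : ℂ} (hζ : ζ ^ 2 + ζ + 1 = 0) {q : Fin 3 → Fin 3 → ℂˣ}
    (h00 : (q 0 0 : ℂ) = -ζ) (h11 : (q 1 1 : ℂ) = -1) (h22 : (q 2 2 : ℂ) = -1)
    (h01 : qtil q 0 1 = ζ) (h02 : qtil q 0 2 = 1) (h12 : qtil q 1 2 = -1) :
    ¬ FiniteRootSystem q := by
  have h10 : qtil q 1 0 ≠ 1 := by rw [qtil_comm, h01]; exact cubeRoot_ne_one hζ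
  have h12' : qtil q 1 2 ≠ 1 := by rw [h12]; norm_num
  have h20 : qtil (reflectMat q 1) 2 0 = -ζ := by
    rw [qtil_comm, qtil_reflectMat_of_ne_one (by decide) (by decide) h11 h10 h12', h02,
      qtil_comm, h01, h12]
    ring
  refine not_finiteRootSystem_of_reach (i := 2) (j := 0) ((ReachRoot.simple 0).reflect 1)
    (by decide) ?_ ?_ ?_
  · rw [reflectMat_diag_of_ne_one (by decide) h11 h12', h22, h12]; ring
  · rw [h20]; exact neg_cubeRoot_ne_one hζ
  · rw [h20, reflectMat_diag_of_ne_one (by decide) h11 h10, h00, qtil_comm, h01]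
    linear_combination (1 - ζ) * hζ

theorem not_finiteRootSystem_fork {ζ : ℂ} (hζ : ζ ^ 2 + ζ + 1 = 0) {q : Fin 3 → Fin 3 → ℂˣ}
    (h00 : (q 0 0 : ℂ) = -1) (h11 : (q 1 1 : ℂ) = ζ) (h22 : (q 2 2 : ℂ) = -1)
    (h01 : qtil q 0 1 = -ζ) (h02 : qtil q 0 2 = 1) (h12 : qtil q 1 2 = -ζ) :
    ¬ FiniteRootSystem q := by
  have h01' : qtil q 0 1 ≠ 1 := by rw [h01]; exact neg_cubeRoot_ne_one hζ
  have h21 : qtil (reflectMat q 0) 2 1 = -ζ := by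
    rw [qtil_comm, qtil_reflectMat_of_eq_one (by decide) (by decide) h00 h01' h02, h12]
  refine not_finiteRootSystem_of_reach (i := 2) (j := 1) ((ReachRoot.simple 0).reflect 0)
    (by decide) ?_ ?_ ?_
  · rw [reflectMat_diag_of_eq_one (by decide) h02, h22]
  · rw [h21]; exact neg_cubeRoot_ne_one hζ
  · rw [h21, reflectMat_diag_of_ne_one (by decide) h00 h01', h11, h01]
    linear_combination (1 - ζ) * hζ

end Reflections

section Kill

variable {θ : ℕ} {q : Fin θ → Fin θ → ℂˣ} {S : BraidedStr θ q} {I : Submodule ℂ (TV θ)}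

theorem qf_ne_zero (a b : Fin θ → ℕ) : qf q a b ≠ 0 :=
  Finset.prod_ne_zero_iff.2 fun i _ => Finset.prod_ne_zero_iff.2 fun j _ =>
    pow_ne_zero _ (q i j).ne_zero

/-- The braiding matrix of a family of elements of multidegrees `β a`. -/
def famMat {r : ℕ} (q : Fin θ → Fin θ → ℂˣ) (β : Fin r → Fin θ → ℕ) : Fin r → Fin r → ℂˣ :=
  fun a b => Units.mk0 (qf q (β a) (β b)) (qf_ne_zero _ _)

theorem IsPreNicholsIdeal.finiteRootSystem_cons (hI : IsPreNicholsIdeal S I) (hAAH : AAH)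
    (hGK : FinGK I) {p : TV θ} {β : Fin θ → ℕ} (hp : p ∈ homogD θ β) (hprim : hI.Prim p)
    (hβ : 2 ≤ ∑ l, β l) (hpI : p ∉ I) {s : ℕ} {ls : Fin s → Fin θ}
    (hls : Function.Injective ls) :
    FiniteRootSystem (famMat q (Fin.cons β fun a => δ θ (ls a))) := by
  refine hI.finiteRootSystem hAAH hGK (p := Fin.cons p fun a => gen θ (ls a)) ?_ ?_ ?_
    (fun _ _ => rfl)
  · intro a
    refine Fin.cases ?_ (fun a => ?_) a
    · simpa using hp
    · simpa using gen_mem_homogD _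
  · intro a
    refine Fin.cases ?_ (fun a => ?_) a
    · simpa using hprim
    · rw [Fin.cons_succ]; exact hI.quotL_gen _
  · intro c₀ c hc
    rw [Fin.sum_univ_succ] at hc
    simp only [Fin.cons_zero, Fin.cons_succ] at hc
    have hp' := homogD_le_homogTot _ hp
    have h0 : c₀ = 0 := by
      simpa [counit_homogTot (by omega) hp'] using hI.counit_eq_zero hc
    have h1 : ∀ a : Fin s, c a.succ = 0 := by
      intro a
      simpa [coord_homogTot _ hβ hp', coord_gen, hls.eq_iff] using hI.coord_eq_zero (ls a) hc
    have h2 : c 0 = 0 := by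
      by_contra h
      refine hpI ?_
      simp only [h0, h1, zero_smul, Finset.sum_const_zero, add_zero, zero_add] at hc
      simpa [smul_smul, h] using I.smul_mem (c 0)⁻¹ hc
    exact ⟨h0, funext fun a => Fin.cases h2 h1 a⟩

/-- In finite GKdim a decomposable primitive element whose vertex has label `1` and is not
isolated vanishes. -/
theorem IsPreNicholsIdeal.mem_of_prim (hI : IsPreNicholsIdeal S I) (hAAH : AAH)
    (hGK : FinGK I) {p : TV θ} {β : Fin θ → ℕ} (hp : p ∈ homogD θ β) (hprim : hI.Prim p)
    (hβ : 2 ≤ ∑ l, β l) (h1 : qf q β β = 1) (l : Fin θ)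
    (hl : qf q β (δ θ l) * qf q (δ θ l) β ≠ 1) : p ∈ I := by
  by_contra hpI
  have hf := hI.finiteRootSystem_cons hAAH hGK hp hprim hβ hpI
    (ls := fun _ : Fin 1 => l) (Function.injective_of_subsingleton _)
  refine not_reflectable_of_one (i := 0) (j := 1) (by decide) ?_ ?_
    (hf.1 _ 0 ⟨_, ReachRoot.simple 0⟩)
  · simpa [famMat] using h1
  · simpa [famMat, qtil] using hl

end Kill

section SkewAlgebra

variable {A : Type*} [Ring A]

theorem mul_mul_eq_zero {x y : A} (h : x * y = 0) (z : A) : x * (y * z) = 0 := by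
  rw [← mul_assoc, h, zero_mul]

theorem mul_mul_mul_eq_zero {x y w : A} (h : x * (y * w) = 0) (z : A) :
    x * (y * (w * z)) = 0 := by
  rw [← mul_assoc y, ← mul_assoc x, h, zero_mul]

variable [Algebra ℂ A]

theorem skew_assoc {x y : A} {c : ℂ} (h : x * y = c • (y * x)) (z : A) :
    x * (y * z) = c • (y * (x * z)) := by
  rw [← mul_assoc, h, smul_mul_assoc, mul_assoc]

theorem cube_add {ζ : ℂ} (hζ : ζ ^ 2 + ζ + 1 = 0) {a b : A} (h : b * a = ζ • (a * b)) :
    (a + b) * ((a + b) * (a + b)) = a * (a * a) + b * (b * b) := by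
  simp only [mul_add, add_mul, h, skew_assoc h, mul_smul_comm, smul_smul]
  match_scalars <;> grind

theorem sq_add {a b : A} (h : b * a = (-1 : ℂ) • (a * b)) :
    (a + b) * (a + b) = a * a + b * b := by
  simp only [mul_add, add_mul, h]
  module

theorem skewComm_add {a b c d : A} {s s' : ℂ} (hs : s * s' = 1) (hbc : b * c = s • (c * b))
    (hda : d * a = s' • (a * d)) :
    (a + b) * (c + d) - s • ((c + d) * (a + b)) =
      (a * c - s • (c * a)) + (b * d - s • (d * b)) := by
  simp only [mul_add, add_mul, hbc, hda]
  match_scalars <;> grind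

/-- The quintic `[(ad x)^2 y, (ad x) y]_c` is additive on skew commuting pairs. -/
theorem quintic_add {ζ s s' : ℂ} (hζ : ζ ^ 2 + ζ + 1 = 0) (hs : s * s' = -ζ) {a b c d : A}
    (hba : b * a = ζ • (a * b)) (hbc : b * c = s • (c * b)) (hda : d * a = s' • (a * d))
    (hdc : d * c = (-1 : ℂ) • (c * d)) (ha : a * (a * a) = 0) (hb : b * (b * b) = 0)
    (hc : c * c = 0) (hd : d * d = 0) {Y₁ Y₂ c₁ c₂ d₁ d₂ : A}
    (hY₁ : Y₁ = (a + b) * (c + d) - s • ((c + d) * (a + b)))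
    (hY₂ : Y₂ = (a + b) * Y₁ - (ζ * s) • (Y₁ * (a + b)))
    (hc₁ : c₁ = a * c - s • (c * a)) (hc₂ : c₂ = a * c₁ - (ζ * s) • (c₁ * a))
    (hd₁ : d₁ = b * d - s • (d * b)) (hd₂ : d₂ = b * d₁ - (ζ * s) • (d₁ * b)) :
    Y₂ * Y₁ - s • (Y₁ * Y₂) = (c₂ * c₁ - s • (c₁ * c₂)) + (d₂ * d₁ - s • (d₁ * d₂)) := by
  subst hY₂ hc₂ hd₂ hY₁ hc₁ hd₁
  simp only [mul_add, add_mul, mul_sub, sub_mul, mul_assoc, hba, skew_assoc hba, hbc,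
    skew_assoc hbc, hda, skew_assoc hda, hdc, skew_assoc hdc, mul_mul_mul_eq_zero ha, hb,
    mul_mul_mul_eq_zero hb, mul_mul_eq_zero hc, hd, mul_mul_eq_zero hd, smul_mul_assoc,
    mul_smul_comm, smul_smul, mul_zero, smul_zero]
  match_scalars <;> grind

theorem skewComm_split {t t' : ℂ} (ht : t * t' = -1) {u d e f : A} (hde : d * e = t • (e * d))
    (hfu : f * u = t' • (u * f)) :
    (u + d) * (e + f) - t • ((e + f) * (u + d)) =
      (u * e - t • (e * u)) + (d * f - t • (f * d)) + (2 : ℂ) • (u * f) := by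
  simp only [mul_add, add_mul, hde, hfu]
  match_scalars <;> grind

theorem sq_skewComm_add {t t' : ℂ} (ht : t * t' = -1) {u d e f : A}
    (hdu : d * u = (-1 : ℂ) • (u * d)) (hde : d * e = t • (e * d)) (hfu : f * u = t' • (u * f))
    (hfe : f * e = (-1 : ℂ) • (e * f)) (hu : u * u = 0)
    (hfd : d * (f * f) = t ^ 2 • (f * (f * d))) {Z P Q : A}
    (hZ : Z = (u + d) * (e + f) - t • ((e + f) * (u + d))) (hP : P = u * e - t • (e * u))
    (hQ : Q = d * f - t • (f * d)) : Z * Z = P * P + Q * Q := by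
  subst hZ hP hQ
  simp only [mul_add, add_mul, mul_sub, sub_mul, mul_assoc, hdu, skew_assoc hdu, hde,
    skew_assoc hde, hfu, skew_assoc hfu, hfe, skew_assoc hfe, mul_mul_eq_zero hu, hfd,
    smul_mul_assoc, mul_smul_comm, smul_smul, mul_zero, smul_zero]
  match_scalars <;> grind

theorem skewDer_mul {p r r' : ℂ} (hr : r * r' = 1) {a b f u : A} (hbu : b * u = p • (u * b))
    (hfa : f * a = r' • (a * f)) (hbf : b * f = r • (f * b)) :
    (a + b) * (u * f) - (p * r) • ((u * f) * (a + b)) = (a * u - p • (u * a)) * f := by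
  simp only [mul_add, add_mul, sub_mul, mul_assoc, skew_assoc hbu, hbf, hfa, smul_mul_assoc,
    mul_smul_comm, smul_smul]
  match_scalars <;> grind

theorem skewComm_comm {x y z : A} {c c' s : ℂ} (hxy : x * y = c • (y * x))
    (hxz : x * z = c' • (z * x)) :
    x * (y * z - s • (z * y)) = (c * c') • ((y * z - s • (z * y)) * x) := by
  simp only [mul_sub, sub_mul, mul_assoc, skew_assoc hxy, skew_assoc hxz, hxy, hxz,
    smul_mul_assoc, mul_smul_comm, smul_smul]
  match_scalars <;> ring

theorem comm_of_quadratic {t t' : ℂ} (ht : t * t' = -1) {d f : A}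
    (hfd : d * (f * f) = t ^ 2 • (f * (f * d))) :
    f * (d * f - t • (f * d)) = t' • ((d * f - t • (f * d)) * f) := by
  simp only [mul_sub, sub_mul, mul_assoc, hfd, smul_mul_assoc, mul_smul_comm]
  match_scalars <;> grind

/-- `(ad x)^3 y = 0` when `x^3 = 0`. -/
theorem skewDer_cube {ζ p : ℂ} (hζ : ζ ^ 2 + ζ + 1 = 0) {a u G₁ G₂ : A} (ha : a * (a * a) = 0)
    (hG₁ : G₁ = a * u - p • (u * a)) (hG₂ : G₂ = a * G₁ - (ζ * p) • (G₁ * a)) :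
    a * G₂ = (ζ ^ 2 * p) • (G₂ * a) := by
  subst hG₂ hG₁
  simp only [mul_sub, sub_mul, mul_assoc, ha, mul_mul_mul_eq_zero ha, smul_mul_assoc,
    mul_smul_comm, mul_zero, smul_zero]
  match_scalars <;> grind

theorem skewComm_skewDer {p r t : ℂ} {a u e : A} (hae : a * e = r • (e * a)) :
    a * (u * e - t • (e * u)) - (p * r) • ((u * e - t • (e * u)) * a) =
      (a * u - p • (u * a)) * e - (t * r) • (e * (a * u - p • (u * a))) := by
  simp only [mul_sub, sub_mul, mul_assoc, skew_assoc hae, hae, smul_mul_assoc,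
    mul_smul_comm, smul_smul]
  match_scalars <;> grind

/-- The consequence of `[x_{iij}, x_{ij}]_c = 0` in degree `3α_i + 2α_j + α_k`. -/
theorem mixed_relation {p r t lam : ℂ} (hlam : lam * (t * r) = -1) {e G₁ G₂ c₁ c₂ : A}
    (hG : G₂ * G₁ = p • (G₁ * G₂)) (hc₁ : c₁ = G₁ * e - (t * r) • (e * G₁))
    (hc₂ : c₂ = G₂ * e - (t * r * r) • (e * G₂)) :
    c₂ * G₁ + (p * lam) • (G₁ * c₂) - lam • (G₂ * c₁) - (p * r) • (c₁ * G₂) = 0 := by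
  have hG' : ∀ z, G₂ * (G₁ * z) = p • (G₁ * (G₂ * z)) := fun z => by
    rw [← mul_assoc, hG, smul_mul_assoc, mul_assoc]
  subst hc₁ hc₂
  simp only [mul_sub, sub_mul, mul_assoc, hG, hG', smul_mul_assoc,
    mul_smul_comm, smul_smul]
  match_scalars <;> grind

/-- The mixed terms `G_i f` do not contribute to `[Y₂, Y₁]_c`. -/
theorem cross_terms {ζ p p' r r' t' lam : ℂ} (hζ : ζ ^ 2 + ζ + 1 = 0) (hp : p * p' = -ζ)
    (hr : r * r' = 1) (hlam : lam = r' * t') {a f Q G₁ G₂ c₁ c₂ d₁ d₂ : A}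
    (hfa : f * a = r' • (a * f)) (hfG₁ : f * G₁ = lam • (G₁ * f))
    (hfG₂ : f * G₂ = (lam * r') • (G₂ * f)) (hfc₁ : f * c₁ = (-lam) • (c₁ * f))
    (hfc₂ : f * c₂ = (-(lam * r')) • (c₂ * f)) (hfQ : f * Q = t' • (Q * f))
    (hfd₁ : f * d₁ = lam • (d₁ * f)) (hfd₂ : f * d₂ = (lam * r') • (d₂ * f))
    (hQG₁ : Q * G₁ = (-(p' * lam)) • (G₁ * Q))
    (hQG₂ : Q * G₂ = (-(p' * lam * (p' * r'))) • (G₂ * Q))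
    (hdG₁₁ : d₁ * G₁ = (ζ ^ 2 * lam) • (G₁ * d₁))
    (hdG₁₂ : d₁ * G₂ = (lam * (p' * r')) • (G₂ * d₁))
    (hdG₂₁ : d₂ * G₁ = (lam * p) • (G₁ * d₂)) (haG₁ : a * G₁ = G₂ + (ζ * p) • (G₁ * a))
    (haG₂ : a * G₂ = (ζ ^ 2 * p) • (G₂ * a)) (hGG : G₂ * G₁ = p • (G₁ * G₂))
    (hmix : c₂ * G₁ + (p * lam) • (G₁ * c₂) - lam • (G₂ * c₁) - (p * r) • (c₁ * G₂) = 0)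
    {Z₁ Z₂ Y₁ Y₂ : A} (hZ₁ : Z₁ = c₁ + d₁ + (1 + ζ) • (a * Q))
    (hZ₂ : Z₂ = c₂ + d₂ + a * d₁ + a * (a * Q)) (hY₁ : Y₁ = Z₁ + (2 : ℂ) • (G₁ * f))
    (hY₂ : Y₂ = Z₂ + (2 : ℂ) • (G₂ * f)) :
    Y₂ * Y₁ - (p * r) • (Y₁ * Y₂) = Z₂ * Z₁ - (p * r) • (Z₁ * Z₂) := by
  have hc : c₂ * G₁ = lam • (G₂ * c₁) + (p * r) • (c₁ * G₂) - (p * lam) • (G₁ * c₂) := by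
    rw [eq_sub_iff_add_eq, ← sub_eq_zero, ← sub_sub]
    exact hmix
  have hc' : c₂ * (G₁ * f) = lam • (G₂ * (c₁ * f)) + (p * r) • (c₁ * (G₂ * f)) -
      (p * lam) • (G₁ * (c₂ * f)) := by
    rw [← mul_assoc, hc]
    simp only [add_mul, sub_mul, smul_mul_assoc, mul_assoc]
  have haG₁' : ∀ z, a * (G₁ * z) = G₂ * z + (ζ * p) • (G₁ * (a * z)) := fun z => by
    rw [← mul_assoc, haG₁, add_mul, smul_mul_assoc, mul_assoc]
  suffices h : Z₂ * (G₁ * f) + G₂ * f * Z₁ + (2 : ℂ) • (G₂ * f * (G₁ * f)) -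
      (p * r) • (Z₁ * (G₂ * f) + G₁ * f * Z₂ + (2 : ℂ) • (G₁ * f * (G₂ * f))) = 0 by
    have : Y₂ * Y₁ - (p * r) • (Y₁ * Y₂) = Z₂ * Z₁ - (p * r) • (Z₁ * Z₂) +
        (2 : ℂ) • (Z₂ * (G₁ * f) + G₂ * f * Z₁ + (2 : ℂ) • (G₂ * f * (G₁ * f)) -
      (p * r) • (Z₁ * (G₂ * f) + G₁ * f * Z₂ + (2 : ℂ) • (G₁ * f * (G₂ * f)))) := by
      subst hY₁ hY₂
      simp only [mul_add, add_mul, smul_mul_assoc, mul_smul_comm]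
      module
    rw [this, h, smul_zero, add_zero]
  subst hZ₁ hZ₂ hlam
  simp only [mul_add, add_mul, mul_assoc, skew_assoc hfa, skew_assoc hfG₁,
    skew_assoc hfG₂, hfc₁, hfc₂, hfQ, hfd₁, hfd₂, skew_assoc hQG₁, skew_assoc hQG₂,
    skew_assoc hdG₁₁, skew_assoc hdG₁₂, skew_assoc hdG₂₁, haG₁', skew_assoc haG₂,
    skew_assoc hGG, hc', smul_mul_assoc, mul_smul_comm, smul_smul, smul_add]
  match_scalars <;> grind

theorem skewDer_split {ζ s s' : ℂ} (hs : s * s' = -ζ) {a b P Q : A}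
    (hbP : b * P = s • (P * b)) (hQa : Q * a = s' • (a * Q)) :
    (a + b) * (P + Q) - s • ((P + Q) * (a + b)) =
      (a * P - s • (P * a)) + (b * Q - s • (Q * b)) + (1 + ζ) • (a * Q) := by
  simp only [mul_add, add_mul, hbP, hQa]
  match_scalars <;> grind

theorem skewDer_split_sq {ζ s s' : ℂ} (hζ : ζ ^ 2 + ζ + 1 = 0) (hs : s * s' = -ζ)
    {a b Q c₁ d₁ : A} (hba : b * a = ζ • (a * b)) (hQa : Q * a = s' • (a * Q))
    (hbc₁ : b * c₁ = (ζ * s) • (c₁ * b)) (hd₁a : d₁ * a = (ζ * s') • (a * d₁))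
    (hd₁ : d₁ = b * Q - s • (Q * b)) :
    (a + b) * (c₁ + d₁ + (1 + ζ) • (a * Q)) -
        (ζ * s) • ((c₁ + d₁ + (1 + ζ) • (a * Q)) * (a + b)) =
      (a * c₁ - (ζ * s) • (c₁ * a)) + (b * d₁ - (ζ * s) • (d₁ * b)) + a * d₁ + a * (a * Q) := by
  have hbQ : b * Q = d₁ + s • (Q * b) := by rw [hd₁]; module
  simp only [mul_add, add_mul, mul_assoc, skew_assoc hba, hbc₁, hd₁a, hbQ, hQa,
    smul_mul_assoc, mul_smul_comm, smul_add, smul_smul]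
  match_scalars <;> grind

end SkewAlgebra

section Relations

variable {θ : ℕ} {q : Fin θ → Fin θ → ℂˣ} {S : BraidedStr θ q} {I : Submodule ℂ (TV θ)}

theorem map_brk {A : Type*} [Ring A] [Algebra ℂ A] (F : TV θ →ₐ[ℂ] A) (a b : Fin θ → ℕ)
    (x y : TV θ) : F (brk q a b x y) = F x * F y - qf q a b • (F y * F x) := by
  simp [brk]

theorem IsPreNicholsIdeal.prim_brk (hI : IsPreNicholsIdeal S I) {a b : Fin θ → ℕ} {x y : TV θ}
    (hx : x ∈ homogD θ a) (hy : y ∈ homogD θ b) (hxP : hI.Prim x) (hyP : hI.Prim y)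
    (hab : qf q a b * qf q b a = 1) : hI.Prim (brk q a b x y) := by
  unfold IsPreNicholsIdeal.Prim at *
  rw [map_brk, map_brk, map_brk, hxP, hyP]
  exact skewComm_add hab (hI.quotB_mul_quotA hx hy) (hI.quotB_mul_quotA hy hx)

theorem IsPreNicholsIdeal.prim_sq (hI : IsPreNicholsIdeal S I) {a : Fin θ → ℕ} {x : TV θ}
    (hx : x ∈ homogD θ a) (hxP : hI.Prim x) (ha : qf q a a = -1) : hI.Prim (x * x) := by
  unfold IsPreNicholsIdeal.Prim at *
  rw [map_mul, map_mul, map_mul, hxP]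
  exact sq_add (ha ▸ hI.quotB_mul_quotA hx hx)

theorem IsPreNicholsIdeal.prim_cube (hI : IsPreNicholsIdeal S I) {a : Fin θ → ℕ} {x : TV θ}
    (hx : x ∈ homogD θ a) (hxP : hI.Prim x) {ζ : ℂ} (hζ : ζ ^ 2 + ζ + 1 = 0)
    (ha : qf q a a = ζ) : hI.Prim (x * (x * x)) := by
  unfold IsPreNicholsIdeal.Prim at *
  simp only [map_mul, hxP]
  exact cube_add hζ (ha ▸ hI.quotB_mul_quotA hx hx)

theorem sum_δ (l : Fin θ) : ∑ m, δ θ l m = 1 := by simp [δ]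

/-- The conditions on the generalized Dynkin diagram spanned by the vertices `i, j, k`. -/
structure SubDiagram (q : Fin θ → Fin θ → ℂˣ) (i j k : Fin θ) (ζ : ℂ) : Prop where
  hij : i ≠ j
  hjk : j ≠ k
  cube : ζ ^ 2 + ζ + 1 = 0
  ii : (q i i : ℂ) = ζ
  jj : (q j j : ℂ) = -1
  kk : (q k k : ℂ) = -1
  ij : (q i j : ℂ) * q j i = -ζ
  ik : (q i k : ℂ) * q k i = 1
  jk : (q j k : ℂ) * q k j = -1

variable {i j k : Fin θ} {ζ : ℂ}

theorem SubDiagram.sq_ne_one (D : SubDiagram q i j k ζ) : ζ ^ 2 ≠ 1 := by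
  intro h
  have := D.cube
  have h2 : ζ = -2 := by linear_combination this - h
  rw [h2] at h; norm_num at h

theorem IsPreNicholsIdeal.gen_cube_mem (hI : IsPreNicholsIdeal S I) (hAAH : AAH)
    (hGK : FinGK I) (D : SubDiagram q i j k ζ) :
    gen θ i * (gen θ i * gen θ i) ∈ I := by
  have hi := gen_mem_homogD i
  obtain ⟨-, -, hζ, ii, jj, kk, ij, ik, jk⟩ := D
  refine hI.mem_of_prim hAAH hGK (mul_mem_homogD hi (mul_mem_homogD hi hi))
    (hI.prim_cube hi (hI.quotL_gen i) hζ (by simpa using ii)) ?_ ?_ j ?_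
  · simp [Finset.sum_add_distrib, sum_δ]
  · simp only [qf_add_left, qf_add_right, qf_δ, ii]
    grind
  · simp only [qf_add_left, qf_add_right, qf_δ]
    rw [show ∀ x y : ℂ, x * (x * x) * (y * (y * y)) = (x * y) ^ 3 by intros; ring, ij]
    intro h
    have : ζ ^ 3 = 1 := by grind
    grind

theorem IsPreNicholsIdeal.gen_sq_mem (hI : IsPreNicholsIdeal S I) (hAAH : AAH)
    (hGK : FinGK I) (D : SubDiagram q i j k ζ) : gen θ j * gen θ j ∈ I := by
  have hj := gen_mem_homogD j
  have hne := D.sq_ne_one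
  obtain ⟨-, -, hζ, ii, jj, kk, ij, ik, jk⟩ := D
  refine hI.mem_of_prim hAAH hGK (mul_mem_homogD hj hj)
    (hI.prim_sq hj (hI.quotL_gen j) (by simpa using jj)) ?_ ?_ i ?_
  · simp [Finset.sum_add_distrib, sum_δ]
  · simp only [qf_add_left, qf_add_right, qf_δ, jj]
    norm_num
  · simp only [qf_add_left, qf_add_right, qf_δ]
    rw [show ∀ x y : ℂ, x * x * (y * y) = (y * x) ^ 2 by intros; ring, ij, neg_sq]
    exact hne

theorem IsPreNicholsIdeal.brk_gen_mem (hI : IsPreNicholsIdeal S I) (hAAH : AAH)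
    (hGK : FinGK I) (D : SubDiagram q i j k ζ) :
    brk q (δ θ i) (δ θ k) (gen θ i) (gen θ k) ∈ I := by
  have hi := gen_mem_homogD i
  have hk := gen_mem_homogD k
  have hjk := D.hjk
  obtain ⟨-, -, hζ, ii, jj, kk, ij, ik, jk⟩ := D
  by_contra hpI
  have hf := hI.finiteRootSystem_cons hAAH hGK (brk_mem_homogD q hi hk)
    (hI.prim_brk hi hk (hI.quotL_gen i) (hI.quotL_gen k) (by simpa using ik))
    (by simp [Finset.sum_add_distrib, sum_δ]) hpI (ls := ![j, k])
    (by intro a b h; fin_cases a <;> fin_cases b <;> simp_all)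
  rw [show (Fin.cons (δ θ i + δ θ k) fun a => δ θ (![j, k] a)) = ![δ θ i + δ θ k, δ θ j, δ θ k] from
    funext fun a => by fin_cases a <;> rfl] at hf
  refine not_finiteRootSystem_chain hζ ?_ ?_ ?_ ?_ ?_ ?_ hf <;>
    simp only [famMat, qtil, Units.val_mk0, Matrix.cons_val, qf_add_left, qf_add_right, qf_δ] <;>
    grind

theorem IsPreNicholsIdeal.brk_gen_sq_mem (hI : IsPreNicholsIdeal S I) (hAAH : AAH)
    (hGK : FinGK I) (D : SubDiagram q i j k ζ) :
    brk q (δ θ j) (δ θ k + δ θ k) (gen θ j) (gen θ k * gen θ k) ∈ I := by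
  have hj := gen_mem_homogD j
  have hk := gen_mem_homogD k
  have hij := D.hij
  obtain ⟨-, -, hζ, ii, jj, kk, ij, ik, jk⟩ := D
  by_contra hpI
  have hf := hI.finiteRootSystem_cons hAAH hGK (brk_mem_homogD q hj (mul_mem_homogD hk hk))
    (hI.prim_brk hj (mul_mem_homogD hk hk) (hI.quotL_gen j)
      (hI.prim_sq hk (hI.quotL_gen k) (by simpa using kk))
      (by simp only [qf_add_left, qf_add_right, qf_δ]; grind))
    (by simp [Finset.sum_add_distrib, sum_δ]) hpI (ls := ![i, j])
    (by intro a b h; fin_cases a <;> fin_cases b <;> simp_all)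
  rw [show (Fin.cons (δ θ j + (δ θ k + δ θ k)) fun a => δ θ (![i, j] a)) = ![δ θ j + (δ θ k + δ θ k), δ θ i, δ θ j] from
    funext fun a => by fin_cases a <;> rfl] at hf
  refine not_finiteRootSystem_fork hζ ?_ ?_ ?_ ?_ ?_ ?_ hf <;>
    simp only [famMat, qtil, Units.val_mk0, Matrix.cons_val, qf_add_left, qf_add_right, qf_δ] <;>
    grind

end Relations

section MainRelation

variable {θ : ℕ} {q : Fin θ → Fin θ → ℂˣ} {S : BraidedStr θ q} {I : Submodule ℂ (TV θ)}

theorem IsPreNicholsIdeal.quotA_comm (hI : IsPreNicholsIdeal S I) {a b : Fin θ → ℕ} {x y : TV θ}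
    (h : brk q a b x y ∈ I) : hI.quotA x * hI.quotA y = qf q a b • (hI.quotA y * hI.quotA x) := by
  rw [← sub_eq_zero, ← map_brk, hI.quotA_eq_zero h]

theorem IsPreNicholsIdeal.quotB_comm (hI : IsPreNicholsIdeal S I) {a b : Fin θ → ℕ} {x y : TV θ}
    (h : brk q a b x y ∈ I) : hI.quotB x * hI.quotB y = qf q a b • (hI.quotB y * hI.quotB x) := by
  rw [← sub_eq_zero, ← map_brk, hI.quotB_eq_zero h]

theorem IsPreNicholsIdeal.quotB_mul_quotA_of_eq (hI : IsPreNicholsIdeal S I) {a b : Fin θ → ℕ}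
    {x y : TV θ} (hx : x ∈ homogD θ a) (hy : y ∈ homogD θ b) {c : ℂ} (hc : qf q a b = c) :
    hI.quotB x * hI.quotA y = c • (hI.quotA y * hI.quotB x) :=
  hc ▸ hI.quotB_mul_quotA hx hy

variable {i j k : Fin θ} {ζ : ℂ}

theorem IsPreNicholsIdeal.brk_sq_mem (hI : IsPreNicholsIdeal S I) (hAAH : AAH)
    (hGK : FinGK I) (D : SubDiagram q i j k ζ) :
    brk q (δ θ j) (δ θ k) (gen θ j) (gen θ k) * brk q (δ θ j) (δ θ k) (gen θ j) (gen θ k) ∈ I := by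
  have hj := gen_mem_homogD j
  have hk := gen_mem_homogD k
  have hjj := hI.gen_sq_mem hAAH hGK D
  have hjkk := hI.quotB_comm (hI.brk_gen_sq_mem hAAH hGK D)
  have hne := D.sq_ne_one
  obtain ⟨-, -, hζ, ii, jj, kk, ij, ik, jk⟩ := D
  refine hI.mem_of_prim hAAH hGK (mul_mem_homogD (brk_mem_homogD q hj hk) (brk_mem_homogD q hj hk))
    ?_ ?_ ?_ i ?_
  · unfold IsPreNicholsIdeal.Prim
    simp only [map_mul]
    refine sq_skewComm_add jk (hI.quotB_mul_quotA_of_eq hj hj (by simp [jj]))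
      (hI.quotB_mul_quotA_of_eq hj hk (by simp)) (hI.quotB_mul_quotA_of_eq hk hj (by simp))
      (hI.quotB_mul_quotA_of_eq hk hk (by simp [kk]))
      (by rw [← map_mul, hI.quotA_eq_zero hjj]) ?_
      (by rw [map_brk, hI.quotL_gen, hI.quotL_gen, qf_δ]) (by rw [map_brk, qf_δ])
      (by rw [map_brk, qf_δ])
    simpa only [map_mul, qf_add_right, qf_δ, mul_assoc, sq] using hjkk
  · simp [Finset.sum_add_distrib, sum_δ]
  · simp only [qf_add_left, qf_add_right, qf_δ, jj, kk]
    grind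
  · simp only [qf_add_left, qf_add_right, qf_δ]
    grind

theorem IsPreNicholsIdeal.brk_quintic_mem (hI : IsPreNicholsIdeal S I) (hAAH : AAH)
    (hGK : FinGK I) (D : SubDiagram q i j k ζ) {y₁ y₂ : TV θ}
    (hy₁ : y₁ = brk q (δ θ i) (δ θ j) (gen θ i) (gen θ j))
    (hy₂ : y₂ = brk q (δ θ i) (δ θ i + δ θ j) (gen θ i) y₁) :
    brk q (δ θ i + (δ θ i + δ θ j)) (δ θ i + δ θ j) y₂ y₁ ∈ I := by
  have hi := gen_mem_homogD i
  have hj := gen_mem_homogD j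
  have hiii := hI.gen_cube_mem hAAH hGK D
  have hjj := hI.gen_sq_mem hAAH hGK D
  have hne := D.sq_ne_one
  obtain ⟨-, -, hζ, ii, jj, kk, ij, ik, jk⟩ := D
  have h₁ : y₁ ∈ homogD θ (δ θ i + δ θ j) := hy₁ ▸ brk_mem_homogD q hi hj
  have h₂ : y₂ ∈ homogD θ (δ θ i + (δ θ i + δ θ j)) := hy₂ ▸ brk_mem_homogD q hi h₁
  refine hI.mem_of_prim hAAH hGK (brk_mem_homogD q h₂ h₁) ?_ ?_ ?_ i ?_
  · unfold IsPreNicholsIdeal.Prim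
    have e : qf q (δ θ i + (δ θ i + δ θ j)) (δ θ i + δ θ j) = q i j := by
      simp only [qf_add_left, qf_add_right, qf_δ]
      grind
    rw [map_brk, map_brk, map_brk, e]
    refine quintic_add hζ ij (hI.quotB_mul_quotA_of_eq hi hi (by simp [ii]))
      (hI.quotB_mul_quotA_of_eq hi hj (by simp)) (hI.quotB_mul_quotA_of_eq hj hi (by simp))
      (hI.quotB_mul_quotA_of_eq hj hj (by simp [jj]))
      (by simp only [← map_mul, hI.quotA_eq_zero hiii])
      (by simp only [← map_mul, hI.quotB_eq_zero hiii])
      (by simp only [← map_mul, hI.quotA_eq_zero hjj])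
      (by simp only [← map_mul, hI.quotB_eq_zero hjj]) ?_ ?_ ?_ ?_ ?_ ?_ <;>
    simp only [hy₂, hy₁, map_brk, hI.quotL_gen, qf_add_right, qf_δ, ii]
  · simp [Finset.sum_add_distrib, sum_δ]
  · simp only [qf_add_left, qf_add_right, qf_δ, jj, ii]
    grind
  · simp only [qf_add_left, qf_add_right, qf_δ]
    grind

set_option maxHeartbeats 1000000 in
theorem IsPreNicholsIdeal.brk_septic_mem (hI : IsPreNicholsIdeal S I) (hAAH : AAH)
    (hGK : FinGK I) (D : SubDiagram q i j k ζ) {z₀ z₁ z₂ : TV θ}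
    (hz₀ : z₀ = brk q (δ θ j) (δ θ k) (gen θ j) (gen θ k))
    (hz₁ : z₁ = brk q (δ θ i) (δ θ j + δ θ k) (gen θ i) z₀)
    (hz₂ : z₂ = brk q (δ θ i) (δ θ i + (δ θ j + δ θ k)) (gen θ i) z₁) :
    brk q (δ θ i + (δ θ i + (δ θ j + δ θ k))) (δ θ i + (δ θ j + δ θ k)) z₂ z₁ ∈ I := by
  have hi := gen_mem_homogD i
  have hj := gen_mem_homogD j
  have hk := gen_mem_homogD k
  have hiii := hI.gen_cube_mem hAAH hGK D
  have hik := hI.quotB_comm (hI.brk_gen_mem hAAH hGK D)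
  have hik' := hI.quotA_comm (hI.brk_gen_mem hAAH hGK D)
  have hjkk := hI.quotB_comm (hI.brk_gen_sq_mem hAAH hGK D)
  have hzz := hI.brk_sq_mem hAAH hGK D
  rw [← hz₀] at hzz
  obtain ⟨y₁, hy₁⟩ : ∃ y, y = brk q (δ θ i) (δ θ j) (gen θ i) (gen θ j) := ⟨_, rfl⟩
  obtain ⟨y₂, hy₂⟩ : ∃ y, y = brk q (δ θ i) (δ θ i + δ θ j) (gen θ i) y₁ := ⟨_, rfl⟩
  have hyy := hI.quotA_comm (hI.brk_quintic_mem hAAH hGK D hy₁ hy₂)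
  have hne := D.sq_ne_one
  obtain ⟨-, -, hζ, ii, jj, kk, ij, ik, jk⟩ := D
  have h₁ : y₁ ∈ homogD θ (δ θ i + δ θ j) := hy₁ ▸ brk_mem_homogD q hi hj
  have h₂ : y₂ ∈ homogD θ (δ θ i + (δ θ i + δ θ j)) := hy₂ ▸ brk_mem_homogD q hi h₁
  have g₀ : z₀ ∈ homogD θ (δ θ j + δ θ k) := hz₀ ▸ brk_mem_homogD q hj hk
  have g₁ : z₁ ∈ homogD θ (δ θ i + (δ θ j + δ θ k)) := hz₁ ▸ brk_mem_homogD q hi g₀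
  have g₂ : z₂ ∈ homogD θ (δ θ i + (δ θ i + (δ θ j + δ θ k))) := hz₂ ▸ brk_mem_homogD q hi g₁
  refine hI.mem_of_prim hAAH hGK (brk_mem_homogD q g₂ g₁) ?_ ?_ ?_ i ?_
  · unfold IsPreNicholsIdeal.Prim
    have e : qf q (δ θ i + (δ θ i + (δ θ j + δ θ k))) (δ θ i + (δ θ j + δ θ k)) =
        q i j * q i k := by
      simp only [qf_add_left, qf_add_right, qf_δ]
      grind
    have e' : qf q (δ θ i + (δ θ i + δ θ j)) (δ θ i + δ θ j) = q i j := by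
      simp only [qf_add_left, qf_add_right, qf_δ]
      grind
    rw [map_brk, map_brk, map_brk, e]
    simp only [map_mul, qf_add_right, qf_δ, e', mul_assoc] at hyy hjkk hik hik'
    set A := hI.quotA
    set B := hI.quotB
    have cube : A (gen θ i) * (A (gen θ i) * A (gen θ i)) = 0 := by
      simp only [A, ← map_mul, hI.quotA_eq_zero hiii]
    have cube' : B (gen θ i) * (B (gen θ i) * B (gen θ i)) = 0 := by
      simp only [B, ← map_mul, hI.quotB_eq_zero hiii]
    have eG₁ : A y₁ = A (gen θ i) * A (gen θ j) - (q i j : ℂ) • (A (gen θ j) * A (gen θ i)) := by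
      rw [hy₁, map_brk, qf_δ]
    have eG₂ : A y₂ = A (gen θ i) * A y₁ - (ζ * q i j) • (A y₁ * A (gen θ i)) := by
      rw [hy₂, map_brk, qf_add_right, qf_δ, qf_δ, ii]
    have zF : ∀ F : TV θ →ₐ[ℂ] Module.End ℂ ((TV θ ⊗[ℂ] TV θ) ⧸ mixedSub I),
        F z₀ = F (gen θ j) * F (gen θ k) - (q j k : ℂ) • (F (gen θ k) * F (gen θ j)) ∧
        F z₁ = F (gen θ i) * F z₀ - ((q i j : ℂ) * q i k) • (F z₀ * F (gen θ i)) ∧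
        F z₂ = F (gen θ i) * F z₁ - (ζ * ((q i j : ℂ) * q i k)) • (F z₁ * F (gen θ i)) :=
      fun F => ⟨by rw [hz₀, map_brk, qf_δ], by rw [hz₁, map_brk, qf_add_right, qf_δ, qf_δ],
        by rw [hz₂, map_brk, qf_add_right, qf_add_right, qf_δ, qf_δ, qf_δ, ii]⟩
    obtain ⟨zA₀, zA₁, zA₂⟩ := zF A
    obtain ⟨zB₀, zB₁, zB₂⟩ := zF B
    obtain ⟨zL₀, zL₁, zL₂⟩ := zF hI.quotL
    rw [hI.quotL_gen] at zL₀ zL₁ zL₂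
    rw [hI.quotL_gen] at zL₀
    have hs : (q i j : ℂ) * q i k * ((q j i : ℂ) * q k i) = -ζ := by grind
    have hlam : (q k i : ℂ) * q k j * ((q j k : ℂ) * q i k) = -1 := by grind
    have hQa : B z₀ * A (gen θ i) = ((q j i : ℂ) * q k i) • (A (gen θ i) * B z₀) :=
      hI.quotB_mul_quotA_of_eq g₀ hi (by rw [qf_add_left, qf_δ, qf_δ])
    have hbP : B (gen θ i) * A z₀ = ((q i j : ℂ) * q i k) • (A z₀ * B (gen θ i)) :=
      hI.quotB_mul_quotA_of_eq hi g₀ (by rw [qf_add_right, qf_δ, qf_δ])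
    have hba : B (gen θ i) * A (gen θ i) = ζ • (A (gen θ i) * B (gen θ i)) :=
      hI.quotB_mul_quotA_of_eq hi hi (by simp [ii])
    have hfa : B (gen θ k) * A (gen θ i) = (q k i : ℂ) • (A (gen θ i) * B (gen θ k)) :=
      hI.quotB_mul_quotA_of_eq hk hi (by simp)
    have hfb : B (gen θ k) * B (gen θ i) = (q k i : ℂ) • (B (gen θ i) * B (gen θ k)) := by
      rw [hik, smul_smul, mul_comm, ik, one_smul]
    have hfQ : B (gen θ k) * B z₀ = (q k j : ℂ) • (B z₀ * B (gen θ k)) := by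
      rw [zB₀]
      exact comm_of_quadratic jk (by simpa only [sq] using hjkk)
    have hfd₁ : B (gen θ k) * B z₁ = ((q k i : ℂ) * q k j) • (B z₁ * B (gen θ k)) := by
      rw [zB₁]
      exact skewComm_comm hfb hfQ
    have hfd₂ : B (gen θ k) * B z₂ =
        ((q k i : ℂ) * q k j * q k i) • (B z₂ * B (gen θ k)) := by
      rw [zB₂, mul_comm ((q k i : ℂ) * q k j)]
      exact skewComm_comm hfb hfd₁
    have hc₁ : A z₁ = A y₁ * A (gen θ k) - ((q j k : ℂ) * q i k) • (A (gen θ k) * A y₁) := by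
      rw [zA₁, zA₀, eG₁]
      exact skewComm_skewDer hik'
    have hc₂ : A z₂ =
        A y₂ * A (gen θ k) - ((q j k : ℂ) * q i k * q i k) • (A (gen θ k) * A y₂) := by
      rw [zA₂, hc₁, eG₂, ← mul_assoc ζ]
      exact skewComm_skewDer hik'
    have split₀ : hI.quotL z₀ = A z₀ + B z₀ + (2 : ℂ) • (A (gen θ j) * B (gen θ k)) := by
      rw [zL₀, skewComm_split jk (hI.quotB_mul_quotA_of_eq hj hk (by simp))
        (hI.quotB_mul_quotA_of_eq hk hj (by simp)), ← zA₀, ← zB₀]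
    have der₁ := skewDer_split hs hbP hQa
    have der₂ := skewDer_split_sq hζ hs hba hQa
      (hI.quotB_mul_quotA_of_eq hi g₁ (by simp only [qf_add_right, qf_δ, ii]))
      (hI.quotB_mul_quotA_of_eq g₁ hi (by simp only [qf_add_left, qf_δ, ii])) zB₁
    rw [← zA₁, ← zB₁] at der₁
    rw [← zA₂, ← zB₂] at der₂
    have cross₁ := skewDer_mul ik (hI.quotB_mul_quotA_of_eq hi hj (qf_δ q i j)) hfa hik
    have cross₂ := skewDer_mul ik (hI.quotB_mul_quotA_of_eq hi h₁ (c := ζ * q i j)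
      (by rw [qf_add_right, qf_δ, qf_δ, ii])) hfa hik
    rw [← eG₁] at cross₁
    rw [← eG₂, mul_assoc] at cross₂
    obtain ⟨Z₁, hZ₁⟩ : ∃ Z, Z = A z₁ + B z₁ + (1 + ζ) • (A (gen θ i) * B z₀) := ⟨_, rfl⟩
    obtain ⟨Z₂, hZ₂⟩ : ∃ Z, Z = A z₂ + B z₂ + A (gen θ i) * B z₁ +
      A (gen θ i) * (A (gen θ i) * B z₀) := ⟨_, rfl⟩
    rw [← hZ₁] at der₁ der₂
    rw [← hZ₂] at der₂
    have split₁ : hI.quotL z₁ = Z₁ + (2 : ℂ) • (A y₁ * B (gen θ k)) := by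
      rw [zL₁, split₀, ← der₁, ← cross₁]
      simp only [mul_add, add_mul, mul_smul_comm, smul_mul_assoc]
      module
    have split₂ : hI.quotL z₂ = Z₂ + (2 : ℂ) • (A y₂ * B (gen θ k)) := by
      rw [zL₂, split₁, ← der₂, ← cross₂]
      simp only [mul_add, add_mul, mul_smul_comm, smul_mul_assoc]
      module
    rw [cross_terms hζ ij ik rfl hfa
      (hI.quotB_mul_quotA_of_eq hk h₁ (by simp only [qf_add_right, qf_δ]))
      (hI.quotB_mul_quotA_of_eq hk h₂ (by simp only [qf_add_right, qf_δ]; ring))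
      (hI.quotB_mul_quotA_of_eq hk g₁ (by simp only [qf_add_right, qf_δ, kk]; ring))
      (hI.quotB_mul_quotA_of_eq hk g₂ (by simp only [qf_add_right, qf_δ, kk]; ring))
      hfQ hfd₁ hfd₂
      (hI.quotB_mul_quotA_of_eq g₀ h₁ (by simp only [qf_add_left, qf_add_right, qf_δ]; grind))
      (hI.quotB_mul_quotA_of_eq g₀ h₂ (by simp only [qf_add_left, qf_add_right, qf_δ]; grind))
      (hI.quotB_mul_quotA_of_eq g₁ h₁ (by simp only [qf_add_left, qf_add_right, qf_δ]; grind))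
      (hI.quotB_mul_quotA_of_eq g₁ h₂ (by simp only [qf_add_left, qf_add_right, qf_δ]; grind))
      (hI.quotB_mul_quotA_of_eq g₂ h₁ (by simp only [qf_add_left, qf_add_right, qf_δ]; grind))
      (by rw [eG₂]; abel) (skewDer_cube hζ cube eG₁ eG₂) hyy (mixed_relation hlam hyy hc₁ hc₂)
      hZ₁ hZ₂ split₁ split₂]
    exact quintic_add hζ hs hba hbP hQa
      (hI.quotB_mul_quotA_of_eq g₀ g₀ (by simp only [qf_add_left, qf_add_right, qf_δ]; grind))
      cube cube' (by rw [← map_mul, hI.quotA_eq_zero hzz])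
      (by rw [← map_mul, hI.quotB_eq_zero hzz]) der₁.symm der₂.symm zA₁ zA₂ zB₁ zB₂
  · simp [Finset.sum_add_distrib, sum_δ]
  · simp only [qf_add_left, qf_add_right, qf_δ, jj, ii, kk]
    grind
  · simp only [qf_add_left, qf_add_right, qf_δ]
    grind

end MainRelation

/-- Lemma 3.9: if `q_{jj} = q_{kk} = q̃_{jk} = -1`,
`q_{ii} = -q̃_{ij} ∈ G₃'` and `q̃_{ik} = 1`, then `[x_{iijk},x_{ijk}]_c = 0`
in every finite-GKdim pre-Nichols algebra of `q`. -/
theorem statement_13 (θ : ℕ) (q : Fin θ → Fin θ → ℂˣ) (S : BraidedStr θ q)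
    (hconn : (dynkin q).Connected)
    (hfd : FiniteDimensional ℂ (TV θ ⧸ Jq S))
    (hAAH : AAH)
    (I : Submodule ℂ (TV θ)) (hI : IsPreNicholsIdeal S I) (hGK : FinGK I)
    (i j k : Fin θ) (hij : i ≠ j) (hik : i ≠ k) (hjk : j ≠ k)
    (h1 : (q j j : ℂ) = -1) (h2 : (q k k : ℂ) = -1) (h3 : qtil q j k = -1)
    (h4 : (q i i : ℂ) = -(qtil q i j)) (h5 : IsPrimitiveRoot (q i i : ℂ) 3)
    (h6 : qtil q i k = 1) :
    brk q (δ θ i + δ θ i + δ θ j + δ θ k) (δ θ i + δ θ j + δ θ k)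
      (xw q [i, i, j, k]) (xw q [i, j, k]) ∈ I := by
  have hζ : (q i i : ℂ) ^ 2 + q i i + 1 = 0 := by
    refine (mul_eq_zero.1 ?_).resolve_left (sub_ne_zero.2 (h5.ne_one (by norm_num)))
    linear_combination h5.pow_eq_one
  have D : SubDiagram q i j k (q i i) :=
    ⟨hij, hjk, hζ, rfl, h1, h2, by rw [h4, neg_neg, qtil], h6, h3⟩
  simpa [xw, ad1, add_assoc] using hI.brk_septic_mem hAAH hGK D rfl rfl rfl

end PreNicholsPaper
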